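/- arXiv:1612.06270 — 2 statements merged into one kernel-verified Lean document; each statement's English description precedes it below -/
import Mathlib

section
/- Let S be a semitopological semigroup. If WAP(S) ∩ LUC(S) has a left invariant mean, then S has the following fixed point property (F*): whenever S acts on a nonempty weakly compact convex subset K of a Banach space and the action is jointly weakly continuous, weakly quasi-equicontinuous and nonexpansive, then K contains a common fixed point for S. -/
/-!
Let `Σ` be the closure of `S` in `K^K`, with `K` carrying its weak topology. Quasi-equicontinuity
makes composition on `Σ` separately continuous, so `Σ` is a compact semitopological semigroup; by
weak lower semicontinuity of the norm its elements are still nonexpansive.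

*Use of the mean.* For `h ∈ C(Σ)` the function `s ↦ h(s)` lies in `WAP(S) ∩ LUC(S)`: joint
continuity of the action gives `LUC`, and `WAP` is Grothendieck's theorem that a bounded map into
`C(Y)` that is continuous for pointwise convergence is continuous for the weak topology
(`continuous_functional_comp`). The mean thus gives a functional `φ` on `C(Σ)` invariant under left
translation by `S`, and, by Grothendieck again, by all of `Σ`. If two closed right ideals were
disjoint, a Urysohn function separating them would have left translates `0` and `1`, contradicting
invariance (`not_disjoint_right_ideals`). Hence a minimal right ideal `R` satisfies `s R = R` for
all `s`, since `s R` is also a minimal right ideal (`exists_invariant_right_ideal`).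

*The orbit.* For an idempotent `e ∈ R` the set `R e` is a group with unit `e`. It acts on the orbit
`F = R e y` transitively by weakly continuous norm isometries, and `s F = F` for all `s`. A weakly
compact set has nonempty relatively weakly open subsets of small norm diameter
(`exists_open_norm_small`); finitely many translates of one of them cover `F`, so `F` is norm totally
bounded (`exists_invariant_totallyBounded`).

*Conclusion.* Take `y` in a minimal nonempty weakly compact convex invariant set `N`. If `F` had
diameter `d > 0`, the barycentre of a finite `d / 2`-net of `F` would be at distance at most some
`r < d` from every point of `F`. The points of `N` with this property form a convex closed set,
invariant because `s F = F`, hence equal to `N ⊇ F`, so that `d ≤ r`. Thus `F` is a single point,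
which is fixed.
-/


open scoped BoundedContinuousFunction

/-- A semitopological semigroup: a semigroup with a topology in which
multiplication is separately continuous. -/
class SemitopoSemigroup (S : Type*) [Semigroup S] [TopologicalSpace S] : Prop where
  cont_left : ∀ t : S, Continuous fun s : S => t * s
  cont_right : ∀ t : S, Continuous fun s : S => s * t

section Ell

variable {S : Type*}

/-- Left translation: `(l_s f)(t) = f (s * t)`. -/
def lTrans [Mul S] (s : S) (f : S → ℂ) : S → ℂ := fun t => f (s * t)

/-- Right translation: `(r_s f)(t) = f (t * s)`. -/
def rTrans [Mul S] (s : S) (f : S → ℂ) : S → ℂ := fun t => f (t * s)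

/-- A bounded complex-valued function, i.e. an element of `ℓ^∞(S)`. -/
def BddFun (f : S → ℂ) : Prop := ∃ C : ℝ, ∀ t, ‖f t‖ ≤ C

/-- The supremum norm on `ℓ^∞(S)`. -/
noncomputable def supNorm (f : S → ℂ) : ℝ := ⨆ t, ‖f t‖

/-- `X` is a norm-closed linear subspace of `ℓ^∞(S)` containing the constants and
invariant under all left and right translations. -/
structure IsTransInvSubspace [Semigroup S] (X : Set (S → ℂ)) : Prop where
  bdd : ∀ f ∈ X, BddFun f
  add_mem : ∀ f ∈ X, ∀ g ∈ X, f + g ∈ X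
  smul_mem : ∀ (c : ℂ), ∀ f ∈ X, c • f ∈ X
  const_mem : ∀ c : ℂ, (fun _ : S => c) ∈ X
  normClosed : ∀ f : S → ℂ, BddFun f →
    (∀ ε > 0, ∃ g ∈ X, ∀ t, ‖f t - g t‖ ≤ ε) → f ∈ X
  lTrans_mem : ∀ (s : S), ∀ f ∈ X, lTrans s f ∈ X
  rTrans_mem : ∀ (s : S), ∀ f ∈ X, rTrans s f ∈ X

/-- `m` is a left invariant mean on `X`: a linear functional with `‖m‖ = m 1 = 1`
which is invariant under left translations. -/
structure IsLIM [Semigroup S] (X : Set (S → ℂ)) (m : (S → ℂ) → ℂ) : Prop where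
  add : ∀ f ∈ X, ∀ g ∈ X, m (f + g) = m f + m g
  smul : ∀ (c : ℂ), ∀ f ∈ X, m (c • f) = c * m f
  norm_le : ∀ f ∈ X, ‖m f‖ ≤ supNorm f
  map_one : m (fun _ : S => (1 : ℂ)) = 1
  left_inv : ∀ (s : S), ∀ f ∈ X, m (lTrans s f) = m f

/-- `X` has a left invariant mean. -/
def HasLIM [Semigroup S] (X : Set (S → ℂ)) : Prop := ∃ m, IsLIM X m

end Ell

/-- The weak topology on a normed space `E` over `𝕜`. -/
noncomputable def weakTop (𝕜 E : Type*) [NontriviallyNormedField 𝕜] [NormedAddCommGroup E]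
    [NormedSpace 𝕜 E] : TopologicalSpace E :=
  ⨅ φ : E →L[𝕜] 𝕜, TopologicalSpace.induced φ inferInstance

section Semitopo

variable {S : Type*} [Semigroup S] [TopologicalSpace S] [SemitopoSemigroup S]

/-- Left translation as a map on `C(S)`, the bounded continuous functions. -/
noncomputable def lTransB (s : S) (F : S →ᵇ ℂ) : S →ᵇ ℂ :=
  F.compContinuous ⟨fun t => s * t, SemitopoSemigroup.cont_left s⟩

/-- Right translation as a map on `C(S)`, the bounded continuous functions. -/
noncomputable def rTransB (s : S) (F : S →ᵇ ℂ) : S →ᵇ ℂ :=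
  F.compContinuous ⟨fun t => t * s, SemitopoSemigroup.cont_right s⟩

/-- `F ∈ C(S)` is weakly almost periodic: its left orbit is relatively compact in
the weak topology of `C(S)`. -/
def IsWAPb (F : S →ᵇ ℂ) : Prop :=
  @IsCompact _ (weakTop ℂ (S →ᵇ ℂ))
    (@closure _ (weakTop ℂ (S →ᵇ ℂ)) (Set.range fun s => lTransB s F))

/-- `F ∈ C(S)` is almost periodic: its left orbit is relatively compact in
the norm topology of `C(S)`. -/
def IsAPb (F : S →ᵇ ℂ) : Prop :=
  IsCompact (closure (Set.range fun s => lTransB s F))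

/-- `F ∈ C(S)` is left uniformly continuous: `s ↦ l_s F` is norm continuous. -/
def IsLUCb (F : S →ᵇ ℂ) : Prop := Continuous fun s => lTransB s F

/-- `WAP(S)` as a subset of `ℓ^∞(S)`. -/
def WAPset (S : Type*) [Semigroup S] [TopologicalSpace S] [SemitopoSemigroup S] :
    Set (S → ℂ) := {f | ∃ F : S →ᵇ ℂ, ⇑F = f ∧ IsWAPb F}

/-- `AP(S)` as a subset of `ℓ^∞(S)`. -/
def APset (S : Type*) [Semigroup S] [TopologicalSpace S] [SemitopoSemigroup S] :
    Set (S → ℂ) := {f | ∃ F : S →ᵇ ℂ, ⇑F = f ∧ IsAPb F}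

/-- `LUC(S)` as a subset of `ℓ^∞(S)`. -/
def LUCset (S : Type*) [Semigroup S] [TopologicalSpace S] [SemitopoSemigroup S] :
    Set (S → ℂ) := {f | ∃ F : S →ᵇ ℂ, ⇑F = f ∧ IsLUCb F}

end Semitopo

section Action

variable {S : Type*} {E : Type*} [NormedAddCommGroup E] [NormedSpace ℝ E]

/-- `act` is an action of the semigroup `S` on the set `K`. -/
def IsActionOn [Semigroup S] (act : S → E → E) (K : Set E) : Prop :=
  (∀ s : S, Set.MapsTo (act s) K K) ∧
    ∀ s s' : S, ∀ x ∈ K, act s (act s' x) = act (s * s') x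

/-- The action is nonexpansive on `K`. -/
def NonexpansiveOn (act : S → E → E) (K : Set E) : Prop :=
  ∀ s : S, ∀ x ∈ K, ∀ y ∈ K, ‖act s x - act s y‖ ≤ ‖x - y‖

/-- The action is weakly separately continuous on `K`. -/
def WeaklySepContOn [TopologicalSpace S] (act : S → E → E) (K : Set E) : Prop :=
  (∀ s : S, @ContinuousOn E E (weakTop ℝ E) (weakTop ℝ E) (act s) K) ∧
    (∀ x ∈ K, @Continuous S E _ (weakTop ℝ E) fun s => act s x)

/-- The action is jointly weakly continuous on `K`. -/
def JointlyWeaklyContOn [TopologicalSpace S] (act : S → E → E) (K : Set E) : Prop :=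
  @ContinuousOn (S × E) E (@instTopologicalSpaceProd S E _ (weakTop ℝ E)) (weakTop ℝ E)
    (fun p => act p.1 p.2) (Set.univ ×ˢ K)

/-- The action is weakly equicontinuous on `K`: the family `{x ↦ s • x : s ∈ S}` is
equicontinuous for the weak topology on `K`. -/
def WeaklyEquicontOn (act : S → E → E) (K : Set E) : Prop :=
  ∀ x ∈ K, ∀ W ∈ @nhds E (weakTop ℝ E) 0,
    ∃ U ∈ @nhdsWithin E (weakTop ℝ E) x K, ∀ y ∈ U, ∀ s : S, act s y - act s x ∈ W

/-- The action is weakly quasi-equicontinuous on `K`: every map in the closure of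
`{x ↦ s • x : s ∈ S}` in `K^K` (with `K` carrying the weak topology) is continuous. -/
def WeaklyQuasiEquicontOn (act : S → E → E) (K : Set E) : Prop :=
  ∀ T ∈ @closure (↥K → ↥K)
      (@Pi.topologicalSpace ↥K (fun _ => ↥K)
        (fun _ => TopologicalSpace.induced Subtype.val (weakTop ℝ E)))
      {F : ↥K → ↥K | ∃ s : S, ∀ x : ↥K, (F x : E) = act s x},
    @Continuous ↥K ↥K (TopologicalSpace.induced Subtype.val (weakTop ℝ E))
      (TopologicalSpace.induced Subtype.val (weakTop ℝ E)) T

end Action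


/-! ### Functionals on `C(Y, ℝ)` and positive measures -/

section Domination
open MeasureTheory Filter Topology
open scoped NNReal CompactlySupported

theorem clamp_abs_le {a b g : ℝ} (ha : 0 ≤ a) (hb : 0 ≤ b) (h : |g| ≤ a + b) :
    |max (-a) (min a g)| ≤ a ∧ |g - max (-a) (min a g)| ≤ b := by
  rw [abs_le] at *
  rcases max_cases (-a) (min a g) with h1 | h1 <;> rcases min_cases a g with h2 | h2 <;>
    refine ⟨⟨?_, ?_⟩, ?_⟩ <;> try rw [abs_le]
  all_goals grind

/-- Every bounded functional on `C(Y, ℝ)` is dominated by a finite positive measure, namely the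
Riesz measure of its total variation `f ↦ sup {ψ g : |g| ≤ f}`. -/
theorem exists_measure_dominating {Y : Type*} [TopologicalSpace Y] [CompactSpace Y] [T2Space Y]
    [MeasurableSpace Y] [BorelSpace Y] (ψ : C(Y, ℝ) →L[ℝ] ℝ) :
    ∃ μ : Measure Y, IsFiniteMeasure μ ∧ ∀ f : C(Y, ℝ), |ψ f| ≤ ∫ y, |f y| ∂μ := by
  classical
  let V : C_c(Y, ℝ≥0) → Set ℝ := fun f => {r | ∃ g : C(Y, ℝ), (∀ y, |g y| ≤ f y) ∧ ψ g = r}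
  have h0V : ∀ f, (0 : ℝ) ∈ V f := fun f => ⟨0, fun y => by simp, by simp⟩
  have hbdd : ∀ f, BddAbove (V f) := by
    intro f
    obtain ⟨C, hC⟩ := (isCompact_range f.continuous).bddAbove
    refine ⟨‖ψ‖ * C, ?_⟩
    rintro _ ⟨g, hg, rfl⟩
    refine (le_abs_self _).trans ((ψ.le_opNorm g).trans ?_)
    gcongr
    refine (ContinuousMap.norm_le _ C.2).2 fun y => (hg y).trans (by exact_mod_cast hC ⟨y, rfl⟩)
  have hlub : ∀ f, IsLUB (V f) (sSup (V f)) := fun f => isLUB_csSup ⟨0, h0V f⟩ (hbdd f)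
  have hnn : ∀ f, 0 ≤ sSup (V f) := fun f => (hlub f).1 (h0V f)
  have hadd : ∀ f₁ f₂, sSup (V (f₁ + f₂)) = sSup (V f₁) + sSup (V f₂) := by
    intro f₁ f₂
    apply le_antisymm
    · refine (hlub _).2 ?_
      rintro _ ⟨g, hg, rfl⟩
      let F₁ : C(Y, ℝ) := ⟨fun y => (f₁ y : ℝ), by fun_prop⟩
      let g₁ : C(Y, ℝ) := ⟨fun y => max (-(f₁ y : ℝ)) (min (f₁ y) (g y)), by fun_prop⟩
      have key : ∀ y, |g₁ y| ≤ f₁ y ∧ |g y - g₁ y| ≤ f₂ y := fun y =>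
        clamp_abs_le (f₁ y).2 (f₂ y).2 (by simpa using hg y)
      have e : ψ g = ψ g₁ + ψ (g - g₁) := by rw [← map_add]; congr 1; abel
      rw [e]
      exact add_le_add ((hlub _).1 ⟨g₁, fun y => (key y).1, rfl⟩)
        ((hlub _).1 ⟨g - g₁, fun y => (key y).2, rfl⟩)
    · rw [← le_sub_iff_add_le]
      refine (hlub _).2 ?_
      rintro _ ⟨g, hg, rfl⟩
      rw [le_sub_iff_add_le, add_comm, ← le_sub_iff_add_le]
      refine (hlub _).2 ?_
      rintro _ ⟨g', hg', rfl⟩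
      rw [le_sub_iff_add_le, ← map_add]
      refine (hlub _).1 ⟨g' + g, fun y => ?_, rfl⟩
      refine (abs_add_le _ _).trans ?_
      have := hg y
      have := hg' y
      simp only [CompactlySupportedContinuousMap.coe_add, Pi.add_apply, NNReal.coe_add]
      linarith
  have hle : ∀ (c : ℝ≥0) f, c * sSup (V f) ≤ sSup (V (c • f)) := by
    intro c f
    rcases eq_or_ne c 0 with rfl | hc
    · simpa using hnn _
    have hc' : (0 : ℝ) < c := by positivity
    rw [← le_div_iff₀' hc']
    refine (hlub _).2 ?_
    rintro _ ⟨g, hg, rfl⟩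
    rw [le_div_iff₀' hc']
    refine (hlub _).1 ⟨(c : ℝ) • g, fun y => ?_, by simp⟩
    have := hg y
    simp only [ContinuousMap.coe_smul, Pi.smul_apply, smul_eq_mul, abs_mul,
      CompactlySupportedContinuousMap.coe_smul, NNReal.coe_mul, abs_of_pos hc']
    gcongr
  have hsmul : ∀ (c : ℝ≥0) f, sSup (V (c • f)) = c * sSup (V f) := by
    intro c f
    refine le_antisymm ?_ (hle c f)
    rcases eq_or_ne c 0 with rfl | hc
    · refine (hlub _).2 ?_
      rintro _ ⟨g, hg, rfl⟩
      have : g = 0 := by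
        ext y
        simpa using hg y
      simp [this]
    · have hc' : (0 : ℝ) < c := by positivity
      have := hle c⁻¹ (c • f)
      rw [smul_smul, inv_mul_cancel₀ hc, one_smul] at this
      rw [NNReal.coe_inv] at this
      rwa [inv_mul_le_iff₀ hc'] at this
  let Λ : C_c(Y, ℝ≥0) →ₗ[ℝ≥0] ℝ≥0 :=
    { toFun := fun f => ⟨sSup (V f), hnn f⟩
      map_add' := fun f g => NNReal.eq (hadd f g)
      map_smul' := fun c f => NNReal.eq (hsmul c f) }
  refine ⟨NNRealRMK.rieszMeasure Λ, inferInstance, fun f => ?_⟩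
  let F : C_c(Y, ℝ≥0) := ⟨⟨fun y => ‖f y‖₊, by fun_prop⟩, HasCompactSupport.of_compactSpace _⟩
  have h1 := NNRealRMK.integral_rieszMeasure Λ F
  have h2 : ∀ y, ((F y : ℝ≥0) : ℝ) = |f y| := fun y => rfl
  simp only [h2] at h1
  rw [h1]
  refine abs_le'.2 ⟨(hlub F).1 ⟨f, fun y => le_rfl, rfl⟩, (hlub F).1 ⟨-f, fun y => ?_, by simp⟩⟩
  simp [h2]

end Domination

/-! ### Grothendieck's theorem on pointwise and weak convergence -/

section Grothendieck
open MeasureTheory Filter Topology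

/-- The sequential core of Grothendieck's theorem: if the points in question are frequent near
`x₀`, there is a sequence of them along which `g` converges pointwise on all of `Y` to `g x₀`. -/
theorem exists_seq_pointwise_tendsto {X Y : Type*} [TopologicalSpace X] [CompactSpace X]
    [TopologicalSpace Y] [CompactSpace Y] (g : X → C(Y, ℝ))
    (hg : ∀ y, Continuous fun x => g x y) (x₀ : X) (bad : X → Prop)
    (hbad : ∃ᶠ x in 𝓝 x₀, bad x) :
    ∃ u : ℕ → X, (∀ n, bad (u n)) ∧ ∀ y, Tendsto (fun n => g (u n) y) atTop (𝓝 (g x₀ y)) := by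
  classical
  -- a finite set of points of `Y` that approximates every point as seen by finitely many `g x`
  have net : ∀ (A : Finset X) (δ : ℝ), 0 < δ →
      ∃ D : Finset Y, ∀ y, ∃ d ∈ D, ∀ x ∈ A, |g x y - g x d| < δ := by
    intro A δ hδ
    have hopen : ∀ d : Y, IsOpen {y | ∀ x ∈ A, |g x y - g x d| < δ} := by
      intro d
      have : {y | ∀ x ∈ A, |g x y - g x d| < δ} = ⋂ x ∈ A, {y | |g x y - g x d| < δ} := by
        ext; simp
      rw [this]
      exact isOpen_biInter_finset fun x _ => isOpen_lt (by fun_prop) continuous_const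
    obtain ⟨D, hD⟩ := isCompact_univ.elim_finite_subcover _ hopen
      fun y _ => Set.mem_iUnion.2 ⟨y, fun x _ => by simpa using hδ⟩
    refine ⟨D, fun y => ?_⟩
    simpa using hD (Set.mem_univ y)
  -- a state `(n, A, D, x)`: the precision, the points used so far, a net for them, the new point
  let P : ℕ × Finset X × Finset Y × X → Prop := fun p =>
    x₀ ∈ p.2.1 ∧ p.2.2.2 ∈ p.2.1 ∧ bad p.2.2.2 ∧
      ∀ y, ∃ d ∈ p.2.2.1, ∀ x ∈ p.2.1, |g x y - g x d| < 1 / ((p.1 : ℝ) + 1)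
  let r : ℕ × Finset X × Finset Y × X → ℕ × Finset X × Finset Y × X → Prop := fun p q =>
    p.1 < q.1 ∧ p.2.1 ⊆ q.2.1 ∧
      ∀ d ∈ p.2.2.1, |g q.2.2.2 d - g x₀ d| < 1 / ((q.1 : ℝ) + 1)
  obtain ⟨f, hP, hr⟩ := exists_seq_of_forall_finset_exists P r (by
    intro s _
    let n := s.sup (fun p => p.1) + 1
    let DD := s.biUnion (fun p => p.2.2.1)
    have hev : ∀ᶠ x in 𝓝 x₀, ∀ d ∈ DD, |g x d - g x₀ d| < 1 / ((n : ℝ) + 1) := by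
      rw [Filter.eventually_all_finset]
      intro d _
      have : Tendsto (fun x => |g x d - g x₀ d|) (𝓝 x₀) (𝓝 |g x₀ d - g x₀ d|) :=
        ((hg d).sub continuous_const).abs.tendsto x₀
      exact this.eventually_lt_const (by simp; positivity)
    obtain ⟨x, hxb, hx⟩ := (hbad.and_eventually hev).exists
    let A := insert x (insert x₀ (s.biUnion fun p => p.2.1))
    obtain ⟨D, hD⟩ := net A (1 / ((n : ℝ) + 1)) (by positivity)
    refine ⟨(n, A, D, x), ⟨by simp [A], by simp [A], hxb, hD⟩, fun p hp => ⟨?_, ?_, ?_⟩⟩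
    · exact Nat.lt_succ_of_le (Finset.le_sup (f := fun p : ℕ × Finset X × Finset Y × X => p.1) hp)
    · intro z hz
      simp only [A, Finset.mem_insert, Finset.mem_biUnion]
      exact Or.inr (Or.inr ⟨p, hp, hz⟩)
    · intro d hd
      exact hx d (Finset.mem_biUnion.2 ⟨p, hp, hd⟩))
  have hmono : StrictMono fun n => (f n).1 := fun m n h => (hr m n h).1
  have hsmall : Tendsto (fun n => 1 / (((f n).1 : ℝ) + 1)) atTop (𝓝 0) :=
    tendsto_one_div_add_atTop_nhds_zero_nat.comp hmono.tendsto_atTop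
  refine ⟨fun n => (f n).2.2.2, fun n => (hP n).2.2.1, fun y => ?_⟩
  choose d hdD hd using fun n => (hP n).2.2.2 y
  -- every `g x` in play takes at `w` the same value as at `y`
  let w := (Ultrafilter.map d (hyperfilter ℕ)).lim
  have hw : Tendsto d (hyperfilter ℕ) (𝓝 w) := Ultrafilter.le_nhds_lim _
  have hgw : ∀ x, (∃ m, ∀ k, m < k → x ∈ (f k).2.1) → g x w = g x y := by
    rintro x ⟨m, hm⟩
    have h1 : Tendsto (fun k => g x (d k)) atTop (𝓝 (g x y)) := by
      rw [tendsto_iff_dist_tendsto_zero]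
      refine squeeze_zero' (Eventually.of_forall fun _ => dist_nonneg) ?_ hsmall
      filter_upwards [eventually_gt_atTop m] with k hk
      rw [dist_comm, Real.dist_eq]
      exact (hd k x (hm k hk)).le
    have h2 : Tendsto (fun k => g x (d k)) (hyperfilter ℕ) (𝓝 (g x w)) :=
      ((g x).continuous.tendsto w).comp hw
    exact tendsto_nhds_unique h2 (h1.mono_left Nat.hyperfilter_le_atTop)
  rw [tendsto_iff_ultrafilter]
  intro U hU
  let z := (Ultrafilter.map (fun n => (f n).2.2.2) U).lim
  have hz : Tendsto (fun n => (f n).2.2.2) U (𝓝 z) := Ultrafilter.le_nhds_lim _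
  have hzd : ∀ k, g z (d k) = g x₀ (d k) := by
    intro k
    have h1 : Tendsto (fun n => g (f n).2.2.2 (d k)) U (𝓝 (g z (d k))) :=
      ((hg (d k)).tendsto z).comp hz
    have h2 : Tendsto (fun n => g (f n).2.2.2 (d k)) atTop (𝓝 (g x₀ (d k))) := by
      rw [tendsto_iff_dist_tendsto_zero]
      refine squeeze_zero' (Eventually.of_forall fun _ => dist_nonneg) ?_ hsmall
      filter_upwards [eventually_gt_atTop k] with n hn
      rw [Real.dist_eq]
      exact ((hr k n hn).2.2 _ (hdD k)).le
    exact tendsto_nhds_unique h1 (h2.mono_left hU)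
  have hzw : g z w = g x₀ w := by
    have h1 : Tendsto (fun k => g z (d k)) (hyperfilter ℕ) (𝓝 (g z w)) :=
      ((g z).continuous.tendsto w).comp hw
    have h2 : Tendsto (fun k => g x₀ (d k)) (hyperfilter ℕ) (𝓝 (g x₀ w)) :=
      ((g x₀).continuous.tendsto w).comp hw
    simp only [hzd] at h1
    exact tendsto_nhds_unique h1 h2
  have h3 : Tendsto (fun n => g (f n).2.2.2 w) U (𝓝 (g z w)) := ((hg w).tendsto z).comp hz
  rw [hzw, hgw x₀ ⟨0, fun k _ => (hP k).1⟩] at h3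
  refine h3.congr fun n => hgw _ ⟨n, fun k hk => (hr n k hk).2.1 (hP n).2.1⟩

/-- Real form of Grothendieck's theorem: dominated convergence for the measure dominating `ψ` turns
the pointwise convergence of a sequence into convergence under `ψ`. -/
theorem continuous_functional_comp_real {X Y : Type*} [TopologicalSpace X] [CompactSpace X]
    [TopologicalSpace Y] [CompactSpace Y] [T2Space Y] (g : X → C(Y, ℝ)) (C : ℝ)
    (hC : ∀ x y, |g x y| ≤ C) (hg : ∀ y, Continuous fun x => g x y) (ψ : C(Y, ℝ) →L[ℝ] ℝ) :
    Continuous fun x => ψ (g x) := by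
  borelize Y
  obtain ⟨μ, hμ, hψ⟩ := exists_measure_dominating ψ
  rw [continuous_iff_continuousAt]
  intro x₀
  by_contra hcon
  obtain ⟨ε, hε, hfr⟩ : ∃ ε > 0, ∃ᶠ x in 𝓝 x₀, ε ≤ |ψ (g x) - ψ (g x₀)| := by
    by_contra! h
    refine hcon (Metric.tendsto_nhds.2 fun ε hε => ?_)
    filter_upwards [h ε hε] with x hx
    rwa [Real.dist_eq]
  obtain ⟨u, hu, hlim⟩ := exists_seq_pointwise_tendsto g hg x₀ _ hfr
  have h1 : Tendsto (fun n => ∫ y, |(g (u n) - g x₀) y| ∂μ) atTop (𝓝 (∫ _, 0 ∂μ)) := by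
    refine tendsto_integral_of_dominated_convergence (fun _ => 2 * C) ?_ (integrable_const _) ?_ ?_
    · intro n
      have : Continuous fun y => |(g (u n) - g x₀) y| := by fun_prop
      exact this.measurable.aestronglyMeasurable
    · intro n
      refine Eventually.of_forall fun y => ?_
      rw [Real.norm_eq_abs, abs_abs, ContinuousMap.sub_apply]
      refine (abs_sub _ _).trans ?_
      linarith [hC (u n) y, hC x₀ y]
    · refine Eventually.of_forall fun y => ?_
      have := ((hlim y).sub_const (g x₀ y)).abs
      simpa using this
  rw [integral_zero] at h1
  obtain ⟨n, hn⟩ := (h1.eventually_lt_const hε).exists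
  have := hψ (g (u n) - g x₀)
  rw [map_sub] at this
  linarith [hu n]

/-- Grothendieck: a bounded map into `C(Y, ℂ)` which is continuous for pointwise convergence is
continuous for the weak topology. -/
theorem continuous_functional_comp {X Y : Type*} [TopologicalSpace X] [CompactSpace X]
    [TopologicalSpace Y] [CompactSpace Y] [T2Space Y] (g : X → C(Y, ℂ)) (C : ℝ)
    (hC : ∀ x y, ‖g x y‖ ≤ C) (hg : ∀ y, Continuous fun x => g x y) (φ : C(Y, ℂ) →L[ℂ] ℂ) :
    Continuous fun x => φ (g x) := by
  let ofR : C(Y, ℝ) →L[ℝ] C(Y, ℂ) :=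
    ContinuousLinearMap.compLeftContinuous ℝ Y Complex.ofRealCLM
  have key : ∀ (L : ℂ →L[ℝ] ℝ) (h : X → C(Y, ℝ)), (∀ x y, |h x y| ≤ C) →
      (∀ y, Continuous fun x => h x y) → Continuous fun x => L (φ (ofR (h x))) := fun L h h1 h2 =>
    continuous_functional_comp_real h C h1 h2 (L.comp ((φ.restrictScalars ℝ).comp ofR))
  have key' : ∀ (h : X → C(Y, ℝ)), (∀ x y, |h x y| ≤ C) →
      (∀ y, Continuous fun x => h x y) → Continuous fun x => φ (ofR (h x)) := by
    intro h h1 h2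
    have := (Complex.continuous_ofReal.comp (key Complex.reCLM h h1 h2)).add
      ((Complex.continuous_ofReal.comp (key Complex.imCLM h h1 h2)).mul_const Complex.I)
    refine this.congr fun x => ?_
    simp
  let hre : X → C(Y, ℝ) := fun x => ⟨fun y => (g x y).re, by fun_prop⟩
  let him : X → C(Y, ℝ) := fun x => ⟨fun y => (g x y).im, by fun_prop⟩
  have e : ∀ x, φ (g x) = φ (ofR (hre x)) + Complex.I * φ (ofR (him x)) := by
    intro x
    have : g x = ofR (hre x) + Complex.I • ofR (him x) := by
      ext y
      simp [ofR, hre, him, mul_comm Complex.I]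
    conv_lhs => rw [this]
    simp
  simp only [e]
  refine (key' hre ?_ ?_).add ((key' him ?_ ?_).const_mul _)
  · exact fun x y => (Complex.abs_re_le_norm _).trans (hC x y)
  · exact fun y => Complex.continuous_re.comp (hg y)
  · exact fun x y => (Complex.abs_im_le_norm _).trans (hC x y)
  · exact fun y => Complex.continuous_im.comp (hg y)

end Grothendieck

/-! ### Compact semitopological semigroups and invariant means -/

section Compactification
open Filter Topology

theorem continuous_dual_weakTop {𝕜 E : Type*} [NontriviallyNormedField 𝕜] [NormedAddCommGroup E]
    [NormedSpace 𝕜 E] (φ : E →L[𝕜] 𝕜) : @Continuous E 𝕜 (weakTop 𝕜 E) _ φ :=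
  continuous_iff_le_induced.2 (iInf_le _ φ)

theorem continuous_to_weakTop {𝕜 E X : Type*} [NontriviallyNormedField 𝕜] [NormedAddCommGroup E]
    [NormedSpace 𝕜 E] [TopologicalSpace X] {f : X → E}
    (hf : ∀ φ : E →L[𝕜] 𝕜, Continuous fun x => φ (f x)) : @Continuous X E _ (weakTop 𝕜 E) f :=
  continuous_iInf_rng.2 fun φ => continuous_induced_rng.2 (hf φ)

theorem t2Space_weakTop (𝕜 E : Type*) [RCLike 𝕜] [NormedAddCommGroup E] [NormedSpace 𝕜 E] :
    @T2Space E (weakTop 𝕜 E) := by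
  refine @T2Space.mk _ (weakTop 𝕜 E) fun x y hxy => ?_
  obtain ⟨φ, hφ⟩ := SeparatingDual.exists_separating_of_ne (R := 𝕜) hxy
  exact @separated_by_continuous _ _ (weakTop 𝕜 E) _ _ _ (continuous_dual_weakTop φ) _ _ hφ

theorem isCompact_closure_of_subset_range {M T : Type*} [TopologicalSpace M] [CompactSpace M]
    [TopologicalSpace T] [T2Space T] {f : M → T} (hf : Continuous f) {s : Set T}
    (hs : s ⊆ Set.range f) : IsCompact (closure s) :=
  (isCompact_range hf).closure_of_subset hs

/-- The operator `h ↦ h ∘ ι` restricting continuous functions on a compact space `M` along a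
continuous map `ι : S → M`. -/
noncomputable def pullback {S M : Type*} [TopologicalSpace S] [TopologicalSpace M] [CompactSpace M]
    (ι : C(S, M)) : C(M, ℂ) →L[ℂ] (S →ᵇ ℂ) :=
  LinearMap.mkContinuous
    { toFun := fun h => (BoundedContinuousFunction.mkOfCompact h).compContinuous ι
      map_add' := fun _ _ => rfl
      map_smul' := fun _ _ => rfl } 1 (fun h => by
        rw [one_mul]
        exact (BoundedContinuousFunction.norm_le (norm_nonneg _)).2 fun s => h.norm_coe_le_norm _)

theorem pullback_apply {S M : Type*} [TopologicalSpace S] [TopologicalSpace M] [CompactSpace M]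
    (ι : C(S, M)) (h : C(M, ℂ)) (s : S) : pullback ι h s = h (ι s) := rfl

/-- Two disjoint closed sets, both of them right ideals of a compact semitopological semigroup `M`
into which `S` maps densely, contradict the existence of a left invariant mean on
`WAP(S) ∩ LUC(S)`. -/
theorem not_disjoint_right_ideals {S : Type*} [Semigroup S] [TopologicalSpace S]
    [SemitopoSemigroup S] (hLIM : HasLIM (WAPset S ∩ LUCset S))
    {M : Type*} [Semigroup M] [TopologicalSpace M] [CompactSpace M] [T2Space M]
    (hl : ∀ a : M, Continuous fun b => a * b) (hr : ∀ b : M, Continuous fun a => a * b)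
    (ι : C(S, M)) (hι : ∀ s t, ι (s * t) = ι s * ι t) (hd : DenseRange ι)
    (hj : Continuous fun p : S × M => ι p.1 * p.2)
    {A B : Set M} (hA : IsClosed A) (hB : IsClosed B) (hAne : A.Nonempty) (hBne : B.Nonempty)
    (hAi : ∀ a ∈ A, ∀ b, a * b ∈ A) (hBi : ∀ a ∈ B, ∀ b, a * b ∈ B) :
    ¬ Disjoint A B := by
  intro hdisj
  obtain ⟨m, hm⟩ := hLIM
  let L : M → C(M, ℂ) → C(M, ℂ) := fun a h => h.comp ⟨fun b => a * b, hl a⟩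
  -- Grothendieck's theorem: left translation is weakly continuous in the translating element
  have hweak : ∀ (h : C(M, ℂ)) (φ : C(M, ℂ) →L[ℂ] ℂ), Continuous fun a => φ (L a h) :=
    fun h φ => continuous_functional_comp (fun a => L a h) ‖h‖ (fun a b => h.norm_coe_le_norm _)
      (fun b => h.continuous.comp (hr b)) φ
  have htrans : ∀ h s, lTransB s (pullback ι h) = pullback ι (L (ι s) h) := by
    intro h s
    ext t
    change h (ι (s * t)) = h (ι s * ι t)
    rw [hι]
  have hWAP : ∀ h, IsWAPb (pullback ι h) := by
    intro h
    refine @isCompact_closure_of_subset_range M _ _ _ (weakTop ℂ (S →ᵇ ℂ)) (t2Space_weakTop ℂ _) _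
      (continuous_to_weakTop fun φ => hweak h (φ.comp (pullback ι))) _ ?_
    rintro _ ⟨s, rfl⟩
    exact ⟨ι s, (htrans h s).symm⟩
  have hLUC : ∀ h, IsLUCb (pullback ι h) := by
    intro h
    let H : C(S × M, ℂ) := ⟨fun p => h (ι p.1 * p.2), h.continuous.comp hj⟩
    have h1 : Continuous fun s => pullback ι (H.curry s) :=
      (pullback ι).continuous.comp H.curry.continuous
    refine h1.congr fun s => ?_
    rw [htrans]
    rfl
  have hmem : ∀ h, (pullback ι h : S → ℂ) ∈ WAPset S ∩ LUCset S := fun h =>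
    ⟨⟨_, rfl, hWAP h⟩, ⟨_, rfl, hLUC h⟩⟩
  let φ : C(M, ℂ) →L[ℂ] ℂ := LinearMap.mkContinuous
    { toFun := fun h => m (pullback ι h)
      map_add' := fun h k => by
        rw [map_add, BoundedContinuousFunction.coe_add, hm.add _ (hmem h) _ (hmem k)]
      map_smul' := fun c h => by
        rw [map_smul, BoundedContinuousFunction.coe_smul]
        exact hm.smul c _ (hmem h) } 1 (fun h => by
          rw [one_mul]
          refine (hm.norm_le _ (hmem h)).trans ?_
          exact Real.iSup_le (fun s => h.norm_coe_le_norm _) (norm_nonneg _))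
  have hinv : ∀ h a, φ (L a h) = φ h := by
    intro h a
    have : (fun a => φ (L a h)) = fun _ => φ h := by
      refine hd.equalizer (hweak h φ) continuous_const ?_
      ext s
      change m (pullback ι (L (ι s) h)) = m (pullback ι h)
      rw [← htrans, ← hm.left_inv s _ (hmem h)]
      rfl
    exact congrFun this a
  obtain ⟨u, hu0, hu1, -⟩ := exists_continuous_zero_one_of_isClosed hA hB hdisj
  let h : C(M, ℂ) := ⟨fun a => (u a : ℂ), by fun_prop⟩
  obtain ⟨a, ha⟩ := hAne
  obtain ⟨b, hb⟩ := hBne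
  have ea : L a h = 0 := by
    ext c
    change (u (a * c) : ℂ) = 0
    simp [hu0 (hAi a ha c)]
  have eb : L b h = ContinuousMap.const M 1 := by
    ext c
    change (u (b * c) : ℂ) = 1
    simp [hu1 (hBi b hb c)]
  have h0 : φ h = 0 := by rw [← hinv h a, ea, map_zero]
  have h1 : φ h = 1 := by
    rw [← hinv h b, eb]
    exact hm.map_one
  exact one_ne_zero (h1.symm.trans h0)

/-- The structure of the minimal right ideal: under the hypotheses, `M` has an idempotent `e` such
that `R = eM` is a minimal right ideal, and `R` is mapped onto itself by every left
translation `ι s`. -/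
theorem exists_invariant_right_ideal {S : Type*} [Semigroup S] [TopologicalSpace S]
    [SemitopoSemigroup S] (hLIM : HasLIM (WAPset S ∩ LUCset S))
    {M : Type*} [Nonempty M] [Semigroup M] [TopologicalSpace M] [CompactSpace M] [T2Space M]
    (hl : ∀ a : M, Continuous fun b => a * b) (hr : ∀ b : M, Continuous fun a => a * b)
    (ι : C(S, M)) (hι : ∀ s t, ι (s * t) = ι s * ι t) (hd : DenseRange ι)
    (hj : Continuous fun p : S × M => ι p.1 * p.2) :
    ∃ (R : Set M) (e : M), IsClosed R ∧ e ∈ R ∧ e * e = e ∧ (∀ a ∈ R, e * a = a) ∧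
      (∀ a ∈ R, ∀ b, a * b ∈ R) ∧ (∀ a ∈ R, ∀ b ∈ R, ∃ c, a * c = b) ∧
      ∀ s, (fun a => ι s * a) '' R = R := by
  let I : Set (Set M) := {N | IsClosed N ∧ N.Nonempty ∧ ∀ a ∈ N, ∀ b, a * b ∈ N}
  obtain ⟨R, hR⟩ : ∃ R, Minimal (· ∈ I) R := by
    refine zorn_superset _ fun c hcs hc => ?_
    refine ⟨⋂₀ c, ⟨isClosed_sInter fun t ht => (hcs ht).1, ?_, fun a ha b => ?_⟩, fun s hs =>
      Set.sInter_subset_of_mem hs⟩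
    · obtain rfl | hcne := c.eq_empty_or_nonempty
      · rw [Set.sInter_empty]
        exact Set.univ_nonempty
      · exact IsCompact.nonempty_sInter_of_directed_nonempty_isCompact_isClosed (hS := hcne.to_subtype)
          (IsChain.directedOn hc.symm) (fun t ht => (hcs ht).2.1)
          (fun t ht => (hcs ht).1.isCompact) (fun t ht => (hcs ht).1)
    · rw [Set.mem_sInter] at ha ⊢
      exact fun t ht => (hcs ht).2.2 a (ha t ht) b
  obtain ⟨hRc, hRne, hRi⟩ := hR.prop
  have hclosed : ∀ a : M, IsClosed (Set.range fun b => a * b) := fun a =>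
    (isCompact_range (hl a)).isClosed
  have hgen : ∀ a ∈ R, ∀ b ∈ R, ∃ c, a * c = b := by
    intro a ha b hb
    have : (Set.range fun b => a * b) = R := by
      refine hR.eq_of_subset ⟨hclosed a, Set.range_nonempty _, ?_⟩ ?_
      · rintro _ ⟨c, rfl⟩ d
        exact ⟨c * d, (mul_assoc _ _ _).symm⟩
      · rintro _ ⟨c, rfl⟩
        exact hRi a ha c
    rw [← this] at hb
    exact hb
  obtain ⟨e, heR, he⟩ := exists_idempotent_in_compact_subsemigroup hr R hRne hRc.isCompact
    fun a ha b _ => hRi a ha b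
  refine ⟨R, e, hRc, heR, he, fun a ha => ?_, hRi, hgen, fun s => ?_⟩
  · obtain ⟨c, rfl⟩ := hgen e heR a ha
    rw [← mul_assoc, he]
  · let R' := (fun a => ι s * a) '' R
    have hR'i : ∀ a ∈ R', ∀ b, a * b ∈ R' := by
      rintro _ ⟨a, ha, rfl⟩ b
      exact ⟨a * b, hRi a ha b, (mul_assoc _ _ _).symm⟩
    have hR'gen : ∀ a ∈ R', ∀ b ∈ R', ∃ c, a * c = b := by
      rintro _ ⟨a, ha, rfl⟩ _ ⟨b, hb, rfl⟩
      obtain ⟨c, rfl⟩ := hgen a ha b hb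
      exact ⟨c, mul_assoc _ _ _⟩
    have hnd := not_disjoint_right_ideals hLIM hl hr ι hι hd hj hRc
      ((hRc.isCompact.image (hl (ι s))).isClosed) hRne (hRne.image _) hRi hR'i
    obtain ⟨c, hcR, hcR'⟩ := Set.not_disjoint_iff.1 hnd
    apply Set.Subset.antisymm
    · intro b hb
      obtain ⟨d, rfl⟩ := hR'gen c hcR' b hb
      exact hRi c hcR d
    · intro b hb
      obtain ⟨d, rfl⟩ := hgen c hcR b hb
      exact hR'i c hcR' d

end Compactification

/-! ### Norm fragmentation of weakly compact sets -/

section Fragmentation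
open Filter Topology

/-- Fragmentability of weakly compact sets. If `j : X → E` is weakly continuous on a nonempty
compact space, some nonempty open subset of `X` has norm-small image. Otherwise a dyadic tree of
open sets, any two disjoint branches of which are norm-separated, produces an uncountable
separated family in a norm-separable subspace. -/
theorem exists_open_norm_small {X E : Type*} [TopologicalSpace X] [CompactSpace X] [T2Space X]
    [Nonempty X] [NormedAddCommGroup E] [NormedSpace ℝ E] (j : X → E)
    (hj : ∀ φ : E →L[ℝ] ℝ, Continuous fun x => φ (j x)) {ε : ℝ} (hε : 0 < ε) :
    ∃ U : Set X, IsOpen U ∧ U.Nonempty ∧ ∀ x ∈ U, ∀ y ∈ U, ‖j x - j y‖ ≤ ε := by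
  by_contra! hcon
  have split : ∀ U : {U : Set X // IsOpen U ∧ U.Nonempty},
      ∃ V : Bool → {U : Set X // IsOpen U ∧ U.Nonempty}, (∀ i, closure (V i).1 ⊆ U.1) ∧
        ∀ a ∈ closure (V true).1, ∀ b ∈ closure (V false).1, ε ≤ ‖j a - j b‖ := by
    rintro ⟨U, hUo, hUne⟩
    obtain ⟨x, hx, y, hy, hxy⟩ := hcon U hUo hUne
    obtain ⟨φ, hφ1, hφ⟩ := exists_dual_vector'' ℝ (j x - j y)
    rw [map_sub] at hφ
    simp only [RCLike.ofReal_real_eq_id, id] at hφ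
    have shrink : ∀ z ∈ U, ∀ W : Set X, IsOpen W → z ∈ W →
        ∃ V : {U : Set X // IsOpen U ∧ U.Nonempty}, closure V.1 ⊆ U ∩ W := by
      intro z hz W hW hzW
      obtain ⟨V, hV, hVo, hVc⟩ := exists_mem_nhds_isClosed_subset
        ((hUo.inter hW).mem_nhds ⟨hz, hzW⟩)
      refine ⟨⟨interior V, isOpen_interior, z, mem_interior_iff_mem_nhds.2 hV⟩, ?_⟩
      exact (closure_minimal interior_subset hVo).trans hVc
    let δ := (φ (j x) - φ (j y) - ε) / 2
    have hδ : 0 < δ := by simp only [δ]; linarith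
    obtain ⟨V₁, hV₁⟩ := shrink x hx {z | φ (j x) - δ < φ (j z)}
      (isOpen_lt continuous_const (hj φ)) (by simpa using hδ)
    obtain ⟨V₀, hV₀⟩ := shrink y hy {z | φ (j z) < φ (j y) + δ}
      (isOpen_lt (hj φ) continuous_const) (by simpa using hδ)
    refine ⟨fun i => if i then V₁ else V₀, ?_, ?_⟩
    · rintro (_ | _)
      · exact fun z hz => (hV₀ hz).1
      · exact fun z hz => (hV₁ hz).1
    · intro a ha b hb
      have h1 : φ (j x) - δ < φ (j a) := (hV₁ ha).2
      have h2 : φ (j b) < φ (j y) + δ := (hV₀ hb).2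
      have h3 : φ (j a - j b) ≤ ‖j a - j b‖ := by
        refine (le_abs_self _).trans ((φ.le_opNorm _).trans ?_)
        exact mul_le_of_le_one_left (norm_nonneg _) hφ1
      rw [map_sub] at h3
      simp only [δ] at h1 h2
      linarith
  choose V hVsub hVsep using split
  let tree : List Bool → {U : Set X // IsOpen U ∧ U.Nonempty} := fun l =>
    List.rec ⟨Set.univ, isOpen_univ, Set.univ_nonempty⟩ (fun i _ U => V U i) l
  have tree_cons : ∀ i l, tree (i :: l) = V (tree l) i := fun i l => rfl
  choose p hp using fun l => (tree l).2.2
  let branch : (ℕ → Bool) → ℕ → List Bool := fun b n => Nat.rec [] (fun k l => b k :: l) n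
  have branch_succ : ∀ b n, branch b (n + 1) = b n :: branch b n := fun b n => rfl
  -- a point on each branch, in the weak closure of the countable set of chosen points
  have hz : ∀ b, ∃ z, z ∈ closure (Set.range p) ∧ ∀ n, z ∈ closure (tree (branch b n)).1 := by
    intro b
    have := IsCompact.nonempty_iInter_of_sequence_nonempty_isCompact_isClosed
      (fun n => closure (Set.range p) ∩ closure (tree (branch b n)).1)
      (fun n => Set.inter_subset_inter_right _ (by
        rw [branch_succ, tree_cons]
        exact (hVsub _ _).trans subset_closure))
      (fun n => ⟨p (branch b n), subset_closure ⟨_, rfl⟩, subset_closure (hp _)⟩)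
      (isClosed_closure.inter isClosed_closure).isCompact
      (fun n => isClosed_closure.inter isClosed_closure)
    obtain ⟨z, hz⟩ := this
    rw [Set.mem_iInter] at hz
    exact ⟨z, (hz 0).1, fun n => (hz n).2⟩
  choose z hzcl hzmem using hz
  have hsep : ∀ b c, b ≠ c → ε ≤ ‖j (z b) - j (z c)‖ := by
    intro b c hbc
    have hex : ∃ n, b n ≠ c n := Function.ne_iff.1 hbc
    classical
    let n := Nat.find hex
    have hn : b n ≠ c n := Nat.find_spec hex
    have hlt : ∀ k < n, b k = c k := fun k hk => not_not.1 (Nat.find_min hex hk)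
    have hbr : ∀ k ≤ n, branch b k = branch c k := by
      intro k
      induction k with
      | zero => exact fun _ => rfl
      | succ k ih =>
        intro hk
        rw [branch_succ, branch_succ, ih (Nat.le_of_succ_le hk), hlt k hk]
    have h1 := hzmem b (n + 1)
    have h2 := hzmem c (n + 1)
    rw [branch_succ, tree_cons] at h1 h2
    rw [hbr n le_rfl] at h1
    rcases hbv : b n with _ | _ <;> rcases hcv : c n with _ | _
    · exact absurd (hbv.trans hcv.symm) hn
    · rw [hbv] at h1; rw [hcv] at h2
      rw [norm_sub_rev]
      exact hVsep _ _ h2 _ h1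
    · rw [hbv] at h1; rw [hcv] at h2
      exact hVsep _ _ h1 _ h2
    · exact absurd (hbv.trans hcv.symm) hn
  let L := (Submodule.span ℝ (Set.range fun l => j (p l))).topologicalClosure
  have hLsep : TopologicalSpace.IsSeparable (L : Set E) := by
    rw [Submodule.topologicalClosure_coe]
    exact ((Set.countable_range _).isSeparable.span (R := ℝ)).closure
  have hzL : ∀ b, j (z b) ∈ L := by
    intro b
    by_contra hnot
    obtain ⟨φ, s, hφ1, hφ2⟩ := geometric_hahn_banach_closed_point L.convex
      (Submodule.isClosed_topologicalClosure _) hnot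
    have hzero : ∀ v ∈ L, φ v = 0 := by
      intro v hv
      by_contra hne
      have := hφ1 ((s / φ v) • v) (L.smul_mem _ hv)
      rw [map_smul, smul_eq_mul, div_mul_cancel₀ _ hne] at this
      exact lt_irrefl _ this
    have hs : 0 < s := by simpa using hφ1 0 L.zero_mem
    have hcl : closure (Set.range p) ⊆ {x | φ (j x) = 0} := by
      refine closure_minimal ?_ (isClosed_eq (hj φ) continuous_const)
      rintro _ ⟨l, rfl⟩
      exact hzero _ (Submodule.le_topologicalClosure _ (Submodule.subset_span ⟨l, rfl⟩))
    have : φ (j (z b)) = 0 := hcl (hzcl b)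
    linarith
  obtain ⟨D, hDc, hD⟩ := hLsep
  have hnear : ∀ b, ∃ d : D, dist (j (z b)) d < ε / 2 := by
    intro b
    obtain ⟨d, hd, hbd⟩ := Metric.mem_closure_iff.1 (hD (hzL b)) (ε / 2) (by positivity)
    exact ⟨⟨d, hd⟩, hbd⟩
  choose f hf using hnear
  have hinj : Function.Injective f := by
    intro b c hbc
    by_contra hne
    have h1 := hsep b c hne
    have h2 := hf b
    have h3 := hf c
    rw [← hbc] at h3
    rw [← dist_eq_norm] at h1
    linarith [dist_triangle_right (j (z b)) (j (z c)) (f b)]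
  have : Countable D := hDc
  have hcount : Countable (ℕ → Bool) := hinj.countable
  obtain ⟨g, hg⟩ := exists_injective_nat (ℕ → Bool)
  exact Function.cantor_injective (fun s : Set ℕ => g fun n => by
    classical exact decide (n ∈ s)) (fun s t hst => by
      ext n
      simpa using congrFun (hg hst) n)

/-- If continuous self-maps that do not decrease norm distances act transitively on a compact set
`F`, then the translates of one norm-small open subset of `F` cover it, so that `F` is norm totally
bounded. -/
theorem exists_finite_net_of_transitive {X E : Type*} [TopologicalSpace X] [T2Space X]
    [NormedAddCommGroup E] [NormedSpace ℝ E] (j : X → E)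
    (hj : ∀ φ : E →L[ℝ] ℝ, Continuous fun x => φ (j x)) {F : Set X} (hF : IsCompact F)
    (hFne : F.Nonempty)
    (htr : ∀ a ∈ F, ∀ u ∈ F, ∃ g : X → X, Continuous g ∧ Set.MapsTo g F F ∧ g a = u ∧
      ∀ x ∈ F, ∀ y ∈ F, ‖j x - j y‖ ≤ ‖j (g x) - j (g y)‖) {ε : ℝ} (hε : 0 < ε) :
    ∃ t : Finset X, ↑t ⊆ F ∧ ∀ x ∈ F, ∃ y ∈ t, ‖j y - j x‖ ≤ ε := by
  classical
  have : CompactSpace F := isCompact_iff_compactSpace.1 hF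
  have : Nonempty F := hFne.to_subtype
  obtain ⟨U, hUo, ⟨u, hu⟩, hU⟩ := exists_open_norm_small (fun x : F => j x)
    (fun φ => (hj φ).comp continuous_subtype_val) hε
  choose g hgc hgm hgu hge using fun a : F => htr a a.2 u u.2
  let G : F → F → F := fun a x => ⟨g a x, hgm a x.2⟩
  have hG : ∀ a, Continuous (G a) := fun a =>
    ((hgc a).comp continuous_subtype_val).subtype_mk _
  obtain ⟨t, ht⟩ := isCompact_univ.elim_finite_subcover (fun a => G a ⁻¹' U)
    (fun a => hUo.preimage (hG a)) fun a _ => Set.mem_iUnion.2 ⟨a, by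
      have : G a a = u := Subtype.ext (hgu a)
      simpa [this] using hu⟩
  refine ⟨t.image Subtype.val, ?_, fun x hx => ?_⟩
  · intro x hx
    obtain ⟨a, _, rfl⟩ := Finset.mem_image.1 (Finset.mem_coe.1 hx)
    exact a.2
  · obtain ⟨a, hat, hxa⟩ := Set.mem_iUnion₂.1 (ht (Set.mem_univ ⟨x, hx⟩))
    refine ⟨a, Finset.mem_image_of_mem _ hat, ?_⟩
    refine (hge a a a.2 x hx).trans ?_
    have := hU u hu _ hxa
    rw [hgu a]
    exact this

end Fragmentation

/-! ### The orbit of the minimal right ideal and the fixed point -/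

section FixedPoint
open Filter Topology

/-- The norm is weakly lower semicontinuous. -/
theorem isClosed_norm_sub_le {X E : Type*} [TopologicalSpace X] [NormedAddCommGroup E]
    [NormedSpace ℝ E] {f g : X → E} (hf : ∀ φ : E →L[ℝ] ℝ, Continuous fun x => φ (f x))
    (hg : ∀ φ : E →L[ℝ] ℝ, Continuous fun x => φ (g x)) {r : ℝ} (hr : 0 ≤ r) :
    IsClosed {x | ‖f x - g x‖ ≤ r} := by
  have : {x | ‖f x - g x‖ ≤ r} = ⋂ φ : E →L[ℝ] ℝ, {x | ‖φ (f x) - φ (g x)‖ ≤ r * ‖φ‖} := by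
    ext x
    simp only [Set.mem_ofPred_eq, Set.mem_iInter]
    constructor
    · intro h φ
      rw [← map_sub, mul_comm]
      exact (φ.le_opNorm _).trans (by gcongr)
    · intro h
      refine NormedSpace.norm_le_dual_bound ℝ _ hr fun φ => ?_
      rw [map_sub]
      exact h φ
  rw [this]
  exact isClosed_iInter fun φ => isClosed_le ((hf φ).sub (hg φ)).norm continuous_const

/-- Every nonempty closed invariant set `N` contains a nonempty compact `F` with `s F = F` for all
`s` which is norm totally bounded: the orbit of a point under the minimal right ideal of the
enveloping semigroup. -/
theorem exists_invariant_totallyBounded {S : Type*} [Semigroup S] [TopologicalSpace S]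
    [SemitopoSemigroup S] (hLIM : HasLIM (WAPset S ∩ LUCset S))
    {X E : Type*} [TopologicalSpace X] [CompactSpace X] [T2Space X] [Nonempty S]
    [NormedAddCommGroup E] [NormedSpace ℝ E] (j : X → E)
    (hj : ∀ φ : E →L[ℝ] ℝ, Continuous fun x => φ (j x))
    (A : S → X → X) (hmul : ∀ s t x, A s (A t x) = A (s * t) x)
    (hA : Continuous fun p : S × X => A p.1 p.2)
    (hqe : ∀ T ∈ closure (Set.range A), Continuous T)
    (hnon : ∀ s x y, ‖j (A s x) - j (A s y)‖ ≤ ‖j x - j y‖)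
    {N : Set X} (hNc : IsClosed N) (hNne : N.Nonempty) (hNinv : ∀ s, Set.MapsTo (A s) N N) :
    ∃ F : Set X, F ⊆ N ∧ F.Nonempty ∧ (∀ s, A s '' F = F) ∧ ∀ ε : ℝ, 0 < ε →
      ∃ t : Finset X, ↑t ⊆ F ∧ ∀ x ∈ F, ∃ y ∈ t, ‖j y - j x‖ ≤ ε := by
  have hright : ∀ R : X → X, Continuous fun T : X → X => T ∘ R := fun R =>
    continuous_pi fun x => continuous_apply (R x)
  have hleft : ∀ T : X → X, Continuous T → Continuous fun R : X → X => T ∘ R := fun T hT =>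
    continuous_pi fun x => hT.comp (continuous_apply x)
  have hAs : ∀ s, Continuous (A s) := fun s => hqe _ (subset_closure ⟨s, rfl⟩)
  have hcl : ∀ T ∈ closure (Set.range A), ∀ R ∈ closure (Set.range A),
      T ∘ R ∈ closure (Set.range A) := by
    intro T hT R hR
    refine map_mem_closure (hright R) hT ?_ |> fun h => closure_closure (X := X → X) ▸ h
    rintro _ ⟨s, rfl⟩
    refine map_mem_closure (hleft _ (hAs s)) hR ?_
    rintro _ ⟨t, rfl⟩
    exact ⟨s * t, funext fun x => (hmul s t x).symm⟩
  let M := closure (Set.range A)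
  let _ : Semigroup M :=
    { mul := fun T R => ⟨T.1 ∘ R.1, hcl _ T.2 _ R.2⟩
      mul_assoc := fun _ _ _ => rfl }
  have mul_val : ∀ (T R : M) x, (T * R).1 x = T.1 (R.1 x) := fun _ _ _ => rfl
  have : CompactSpace M := isCompact_iff_compactSpace.1 isClosed_closure.isCompact
  have hAcont : Continuous A := continuous_pi fun x => hA.comp (continuous_id.prodMk continuous_const)
  let ι : C(S, M) := ⟨fun s => ⟨A s, subset_closure ⟨s, rfl⟩⟩, hAcont.subtype_mk _⟩
  have : Nonempty M := ⟨ι (Classical.arbitrary S)⟩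
  have hdense : DenseRange ι := by
    intro T
    rw [closure_subtype]
    convert T.2
    ext f
    simp [ι]
  obtain ⟨R, e, hRc, heR, hee, heR1, hRi, hRgen, hRS⟩ := exists_invariant_right_ideal hLIM (M := M)
    (fun T => ((hleft T.1 (hqe _ T.2)).comp continuous_subtype_val).subtype_mk _)
    (fun R => ((hright R.1).comp continuous_subtype_val).subtype_mk _) ι
    (fun s t => Subtype.ext (funext fun x => (hmul s t x).symm)) hdense
    (Continuous.subtype_mk (continuous_pi fun x => hA.comp (continuous_fst.prodMk
      ((continuous_apply x).comp (continuous_subtype_val.comp continuous_snd)))) _)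
  have hMnon : ∀ (T : M) x y, ‖j (T.1 x) - j (T.1 y)‖ ≤ ‖j x - j y‖ := by
    intro T x y
    have : closure (Set.range A) ⊆ {T : X → X | ‖j (T x) - j (T y)‖ ≤ ‖j x - j y‖} := by
      refine closure_minimal ?_ (isClosed_norm_sub_le (fun φ => (hj φ).comp (continuous_apply x))
        (fun φ => (hj φ).comp (continuous_apply y)) (norm_nonneg _))
      rintro _ ⟨s, rfl⟩
      exact hnon s x y
    exact this T.2
  have hMN : ∀ (T : M), ∀ x ∈ N, T.1 x ∈ N := by
    intro T x hx
    have : closure (Set.range A) ⊆ {T : X → X | T x ∈ N} := by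
      refine closure_minimal ?_ (hNc.preimage (continuous_apply x))
      rintro _ ⟨s, rfl⟩
      exact hNinv s hx
    exact this T.2
  -- `R e` is a group with unit `e`
  have hinv : ∀ t ∈ R, t * e = t → ∃ c ∈ R, t * c = e ∧ c * t = e := by
    have hone : ∀ t ∈ R, t * e = t → ∃ c ∈ R, c * e = c ∧ t * c = e := by
      intro t ht hte
      obtain ⟨c, hc⟩ := hRgen t ht e heR
      refine ⟨e * c * e, hRi _ (hRi e heR c) e, by rw [mul_assoc, hee], ?_⟩
      rw [← mul_assoc, ← mul_assoc, hte, hc, hee]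
    intro t ht hte
    obtain ⟨c, hcR, hce, htc⟩ := hone t ht hte
    obtain ⟨d, hdR, hde, hcd⟩ := hone c hcR hce
    refine ⟨c, hcR, htc, ?_⟩
    have : d = t := by rw [← heR1 d hdR, ← htc, mul_assoc, hcd, hte]
    rw [← this, hcd]
  obtain ⟨y₀, hy₀⟩ := hNne
  let ev : M → X := fun T => T.1 (e.1 y₀)
  have hev : Continuous ev := (continuous_apply (e.1 y₀)).comp continuous_subtype_val
  -- every point of the orbit is the image of `y₀` under an element of the group `R e`
  have hrep : ∀ x ∈ ev '' R, ∃ t ∈ R, t * e = t ∧ t.1 y₀ = x := by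
    rintro _ ⟨T, hT, rfl⟩
    exact ⟨T * e, hRi T hT e, by rw [mul_assoc, hee], rfl⟩
  have hrep' : ∀ t ∈ R, t * e = t → t.1 y₀ ∈ ev '' R := by
    intro t ht hte
    refine ⟨t, ht, ?_⟩
    change (t * e).1 y₀ = t.1 y₀
    rw [hte]
  refine ⟨ev '' R, ?_, ⟨_, e, heR, rfl⟩, fun s => ?_, fun ε hε => ?_⟩
  · rintro _ ⟨T, -, rfl⟩
    exact hMN T _ (hMN e _ hy₀)
  · conv_rhs => rw [← hRS s]
    rw [Set.image_image, Set.image_image]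
    rfl
  · refine exists_finite_net_of_transitive j hj (hRc.isCompact.image hev) ⟨_, e, heR, rfl⟩ ?_ hε
    intro a ha u hu
    obtain ⟨t, htR, hte, rfl⟩ := hrep a ha
    obtain ⟨v, hvR, hve, rfl⟩ := hrep u hu
    obtain ⟨c, hcR, htc, hct⟩ := hinv t htR hte
    obtain ⟨d, hdR, hvd, hdv⟩ := hinv v hvR hve
    refine ⟨(v * c).1, hqe _ (v * c).2, ?_, ?_, ?_⟩
    · intro x hx
      obtain ⟨w, hwR, hwe, rfl⟩ := hrep x hx
      exact hrep' (v * c * w) (hRi _ (hRi v hvR c) w) (by rw [mul_assoc, hwe])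
    · change (v * c * t).1 y₀ = v.1 y₀
      rw [mul_assoc, hct, hve]
    · have hback : ∀ x ∈ ev '' R, (t * d).1 ((v * c).1 x) = x := by
        intro x hx
        obtain ⟨w, hwR, hwe, rfl⟩ := hrep x hx
        change (t * d * (v * c * w)).1 y₀ = w.1 y₀
        have : t * d * (v * c * w) = w := by
          calc t * d * (v * c * w) = t * (d * v) * c * w := by simp only [mul_assoc]
            _ = w := by rw [hdv, hte, htc, heR1 w hwR]
        rw [this]
      intro x hx y hy
      have := hMnon (t * d) ((v * c).1 x) ((v * c).1 y)
      rwa [hback x hx, hback y hy] at this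

/-- The fixed point theorem for the weakly compact convex set presented as an abstract compact
space `X` with an injection `j : X → E` that is continuous for the weak topology, so that `X`
carries no competing norm topology. -/
theorem exists_common_fixed_point {S : Type*} [Semigroup S] [TopologicalSpace S]
    [SemitopoSemigroup S] (hLIM : HasLIM (WAPset S ∩ LUCset S))
    {X E : Type*} [TopologicalSpace X] [CompactSpace X] [T2Space X] [Nonempty X]
    [NormedAddCommGroup E] [NormedSpace ℝ E] (j : X → E) (hconv : Convex ℝ (Set.range j))
    (hj : ∀ φ : E →L[ℝ] ℝ, Continuous fun x => φ (j x)) (hinj : Function.Injective j)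
    (A : S → X → X) (hmul : ∀ s t x, A s (A t x) = A (s * t) x)
    (hA : Continuous fun p : S × X => A p.1 p.2)
    (hqe : ∀ T ∈ closure (Set.range A), Continuous T)
    (hnon : ∀ s x y, ‖j (A s x) - j (A s y)‖ ≤ ‖j x - j y‖) :
    ∃ x, ∀ s, A s x = x := by
  rcases isEmpty_or_nonempty S with hS | hS
  · exact ⟨Classical.arbitrary X, fun s => isEmptyElim s⟩
  -- convexity is stated through `j` in a form that visibly passes to intersections
  let I : Set (Set X) := {N | IsClosed N ∧ N.Nonempty ∧ (∀ s, Set.MapsTo (A s) N N) ∧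
    ∀ x ∈ N, ∀ y ∈ N, ∀ a b : ℝ, 0 ≤ a → 0 ≤ b → a + b = 1 →
      ∀ z, j z = a • j x + b • j y → z ∈ N}
  obtain ⟨N, hN⟩ : ∃ N, Minimal (· ∈ I) N := by
    refine zorn_superset _ fun c hcs hc => ?_
    refine ⟨⋂₀ c, ⟨isClosed_sInter fun t ht => (hcs ht).1, ?_, fun s x hx t ht => ?_,
      fun x hx y hy a b ha hb hab z hz t ht => ?_⟩, fun s hs => Set.sInter_subset_of_mem hs⟩
    · obtain rfl | hcne := c.eq_empty_or_nonempty
      · rw [Set.sInter_empty]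
        exact Set.univ_nonempty
      · exact IsCompact.nonempty_sInter_of_directed_nonempty_isCompact_isClosed
          (hS := hcne.to_subtype)
          (IsChain.directedOn hc.symm) (fun t ht => (hcs ht).2.1)
          (fun t ht => (hcs ht).1.isCompact) (fun t ht => (hcs ht).1)
    · exact (hcs ht).2.2.1 s (hx t ht)
    · exact (hcs ht).2.2.2 x (hx t ht) y (hy t ht) a b ha hb hab z hz
  obtain ⟨hNc, hNne, hNinv, hNconv⟩ := hN.prop
  have hjN : Convex ℝ (j '' N) := by
    rintro _ ⟨x, hx, rfl⟩ _ ⟨y, hy, rfl⟩ a b ha hb hab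
    obtain ⟨z, hz⟩ := hconv ⟨x, rfl⟩ ⟨y, rfl⟩ ha hb hab
    exact ⟨z, hNconv x hx y hy a b ha hb hab z hz, hz⟩
  obtain ⟨F, hFN, ⟨x₀, hx₀⟩, hFinv, hnet⟩ := exists_invariant_totallyBounded hLIM j hj A hmul hA
    hqe hnon hNc hNne hNinv
  have hbdd : Bornology.IsBounded (j '' F) := by
    obtain ⟨t, -, ht⟩ := hnet 1 one_pos
    refine ((Bornology.isBounded_biUnion_finset t).2
      fun y _ => Metric.isBounded_closedBall (x := j y) (r := 1)).subset ?_
    rintro _ ⟨x, hx, rfl⟩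
    obtain ⟨y, hy, hxy⟩ := ht x hx
    refine Set.mem_iUnion₂.2 ⟨y, hy, ?_⟩
    rwa [Metric.mem_closedBall, dist_comm, dist_eq_norm]
  let d := Metric.diam (j '' F)
  have hd : ∀ x ∈ F, ∀ y ∈ F, ‖j x - j y‖ ≤ d := by
    intro x hx y hy
    rw [← dist_eq_norm]
    exact Metric.dist_le_diam_of_mem hbdd ⟨x, hx, rfl⟩ ⟨y, hy, rfl⟩
  rcases (Metric.diam_nonneg : 0 ≤ d).eq_or_lt with hd0 | hd0
  · refine ⟨x₀, fun s => hinj ?_⟩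
    have hs : A s x₀ ∈ F := hFinv s ▸ Set.mem_image_of_mem _ hx₀
    have := hd _ hs _ hx₀
    rw [show d = 0 from hd0.symm] at this
    exact sub_eq_zero.1 (norm_le_zero_iff.1 this)
  exfalso
  -- the barycentre `u` of a finite `d / 2`-net is uniformly closer than `d` to all points of `F`
  obtain ⟨t, htF, ht⟩ := hnet (d / 2) (by positivity)
  have htne : t.Nonempty := by
    obtain ⟨y, hy, -⟩ := ht x₀ hx₀
    exact ⟨y, hy⟩
  have hcard : (0 : ℝ) < t.card := by exact_mod_cast htne.card_pos
  obtain ⟨u, huN, hu⟩ : ∑ y ∈ t, (1 / (t.card : ℝ)) • j y ∈ j '' N := by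
    refine hjN.sum_mem (fun _ _ => by positivity) ?_ fun y hy => ⟨y, hFN (htF hy), rfl⟩
    rw [Finset.sum_const, nsmul_eq_mul]
    field_simp
  let r := d - d / (2 * t.card)
  have hr0 : 0 ≤ r := by
    have h1 : (1 : ℝ) ≤ t.card := by exact_mod_cast htne.card_pos
    have : d / (2 * t.card) ≤ d := div_le_self hd0.le (by linarith)
    simp only [r]
    linarith
  have hur : ∀ x ∈ F, ‖j u - j x‖ ≤ r := by
    intro x hx
    classical
    obtain ⟨y, hy, hxy⟩ := ht x hx
    have e1 : j u - j x = ∑ q ∈ t, (1 / (t.card : ℝ)) • (j q - j x) := by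
      rw [hu]
      simp only [smul_sub, Finset.sum_sub_distrib, Finset.sum_const, ← Nat.cast_smul_eq_nsmul ℝ,
        smul_smul]
      rw [mul_one_div_cancel hcard.ne', one_smul]
    have e2 : ∑ q ∈ t, ‖j q - j x‖ ≤ t.card * d - d / 2 := by
      rw [← Finset.add_sum_erase t _ hy]
      have : ∑ q ∈ t.erase y, ‖j q - j x‖ ≤ (t.erase y).card • d :=
        Finset.sum_le_card_nsmul _ _ _ fun q hq => hd q (htF (Finset.mem_of_mem_erase hq)) x hx
      rw [Finset.card_erase_of_mem hy, nsmul_eq_mul, Nat.cast_sub htne.card_pos] at this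
      push_cast at this
      linarith
    calc ‖j u - j x‖ ≤ ∑ q ∈ t, ‖(1 / (t.card : ℝ)) • (j q - j x)‖ := by
          rw [e1]
          exact norm_sum_le _ _
      _ = (1 / (t.card : ℝ)) * ∑ q ∈ t, ‖j q - j x‖ := by
          rw [Finset.mul_sum]
          refine Finset.sum_congr rfl fun q _ => ?_
          rw [norm_smul, Real.norm_of_nonneg (by positivity)]
      _ ≤ (1 / (t.card : ℝ)) * (t.card * d - d / 2) := by gcongr
      _ = r := by
          simp only [r]
          field_simp
  -- since `s F = F`, the points of `N` within `r` of all of `F` again form an invariant set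
  have hN' : {x | x ∈ N ∧ ∀ p ∈ F, ‖j x - j p‖ ≤ r} = N := by
    refine hN.eq_of_subset ⟨?_, ⟨u, huN, hur⟩, ?_, ?_⟩ fun x hx => hx.1
    · have : {x | x ∈ N ∧ ∀ p ∈ F, ‖j x - j p‖ ≤ r} = N ∩ ⋂ p ∈ F, {x | ‖j x - j p‖ ≤ r} := by
        ext x
        simp
      rw [this]
      exact hNc.inter (isClosed_biInter fun p _ =>
        isClosed_norm_sub_le hj (fun φ => continuous_const) hr0)
    · rintro s x ⟨hxN, hx⟩
      refine ⟨hNinv s hxN, fun p hp => ?_⟩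
      rw [← hFinv s] at hp
      obtain ⟨q, hq, rfl⟩ := hp
      exact (hnon s x q).trans (hx q hq)
    · rintro x ⟨hxN, hx⟩ y ⟨hyN, hy⟩ a b ha hb hab z hz
      refine ⟨hNconv x hxN y hyN a b ha hb hab z hz, fun p hp => ?_⟩
      have := convex_closedBall (j p) r (x := j x)
        (by rw [Metric.mem_closedBall, dist_eq_norm]; exact hx p hp) (y := j y)
        (by rw [Metric.mem_closedBall, dist_eq_norm]; exact hy p hp) ha hb hab
      rwa [← hz, Metric.mem_closedBall, dist_eq_norm] at this
  have hdr : d ≤ r := by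
    refine Metric.diam_le_of_forall_dist_le hr0 ?_
    rintro _ ⟨x, hx, rfl⟩ _ ⟨y, hy, rfl⟩
    have hxN := hFN hx
    rw [← hN'] at hxN
    rw [dist_eq_norm]
    exact hxN.2 y hy
  have : 0 < d / (2 * t.card) := by positivity
  simp only [r] at hdr
  linarith

theorem continuous_restrict_action {S E : Type*} [TopologicalSpace S] [TopologicalSpace E]
    {K : Set E} {act : S → E → E} (hm : ∀ s, Set.MapsTo (act s) K K)
    (h : ContinuousOn (fun p : S × E => act p.1 p.2) (Set.univ ×ˢ K)) :
    Continuous fun p : S × K => (⟨act p.1 p.2, hm p.1 p.2.2⟩ : K) :=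
  Continuous.subtype_mk (h.comp_continuous (f := fun p : S × K => (p.1, (p.2 : E)))
    (by fun_prop) fun p => ⟨trivial, p.2.2⟩) _

end FixedPoint

/-- Theorem `WAPLUC`: if `WAP(S) ∩ LUC(S)` has a left invariant mean,
then `S` has the fixed point property `(F*)`: whenever `S` acts on a nonempty weakly
compact convex subset `K` of a Banach space and the action is jointly weakly continuous,
weakly quasi-equicontinuous and nonexpansive, then `K` contains a common fixed point. -/
theorem wap_inter_luc_hasLIM_implies_fpp_Fstar (S : Type*) [Semigroup S] [TopologicalSpace S]
    [T2Space S] [SemitopoSemigroup S]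
    (hLIM : HasLIM (WAPset S ∩ LUCset S))
    (E : Type*) [NormedAddCommGroup E] [NormedSpace ℝ E] [CompleteSpace E]
    (K : Set E) (act : S → E → E)
    (hne : K.Nonempty) (hcomp : @IsCompact E (weakTop ℝ E) K) (hconv : Convex ℝ K)
    (hact : IsActionOn act K) (hjc : JointlyWeaklyContOn act K)
    (hqe : WeaklyQuasiEquicontOn act K) (hnon : NonexpansiveOn act K) :
    ∃ x ∈ K, ∀ s : S, act s x = x := by
  let τK : TopologicalSpace K := TopologicalSpace.induced Subtype.val (weakTop ℝ E)
  have hT2 : @T2Space E (weakTop ℝ E) := t2Space_weakTop ℝ E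
  have : @T2Space K τK := @instT2SpaceSubtype E (weakTop ℝ E) _ hT2
  have : @CompactSpace K τK := (@isCompact_iff_compactSpace E (weakTop ℝ E) K).1 hcomp
  have : Nonempty K := hne.to_subtype
  have hval : @Continuous K E τK (weakTop ℝ E) Subtype.val := continuous_induced_dom
  let A : S → K → K := fun s x => ⟨act s x, hact.1 s x.2⟩
  have hrange : Set.range A = {F : ↥K → ↥K | ∃ s : S, ∀ x : ↥K, (F x : E) = act s x} := by
    ext T
    constructor
    · rintro ⟨s, rfl⟩
      exact ⟨s, fun x => rfl⟩
    · rintro ⟨s, hs⟩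
      exact ⟨s, funext fun x => Subtype.ext (hs x).symm⟩
  obtain ⟨x, hx⟩ := @exists_common_fixed_point S _ _ _ hLIM K E τK _ _ _ _ _ Subtype.val
    (by rwa [Subtype.range_coe])
    (fun φ => @Continuous.comp _ _ _ τK (weakTop ℝ E) _ _ _ (continuous_dual_weakTop φ) hval)
    Subtype.val_injective A (fun s t x => Subtype.ext (hact.2 s t x x.2))
    (@continuous_restrict_action S E _ (weakTop ℝ E) K act hact.1 hjc)
    (by rw [hrange]; exact hqe)
    (fun s x y => hnon s x x.2 y y.2)
  exact ⟨x, x.2, fun s => congrArg Subtype.val (hx s)⟩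
end

section
/- Let S be a semitopological semigroup. If LUC(S) has a left invariant mean, then S has the following fixed point property (G*): whenever S acts on a nonempty weakly compact convex subset K of a Banach space and the action is jointly weakly continuous and nonexpansive, then K contains a common fixed point for S. -/
/-!
The left invariant mean is transported to weakly continuous functions on `K`. For `x₀ ∈ K` and a
weakly continuous `φ`, joint continuity and compactness make `t ↦ φ (t • x₀)` left uniformly
continuous, so the mean yields a positive normalized functional `Λ` on `C(K)` with
`Λ (φ ∘ s) = Λ φ` (`exists_invariant_functional`).

Let `C ⊆ K` be minimal among nonempty weakly compact convex invariant sets, `F ⊆ C` minimal among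
nonempty weakly compact invariant sets, and `x₀ ∈ F`. The support of `Λ` is closed and invariant, so
it equals `F`; consequently `s • F = F` for every `s`. Suppose that `F` has norm diameter `d > 0`.
By Namioka's theorem (`IsWeaklyInduced.exists_nhds_norm_le`) some ball of radius `d / 2` centred in
`F` contains a nonempty relatively weakly open part of `F`, so its `Λ`-mass is at least some
`c > 0`. The centres in `F` whose balls of radius `d / 2` have mass at least `c` form a weakly
closed set, which is invariant because the action is nonexpansive; by minimality it is all of `F`.
Hence the barycenter `u ∈ C` of `Λ` (`exists_barycenter`) lies within `r = d - c * d / 4 < d` of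
every point of `F`. Since `s • F = F`, the points of `C` within `r` of all of `F` form an invariant
convex weakly closed set, which is `C` by minimality of `C`. As `F ⊆ C`, the diameter of `F` is at
most `r < d`, a contradiction. So `F` is a single point, and that point is fixed.

Namioka's theorem is derived from Kaplansky's countable tightness of the weak topology
(`IsWeaklyInduced.exists_countable_mem_closure`) and Baire's theorem.
-/

open scoped BoundedContinuousFunction

/-! ### Weakly compact sets -/

open Topology in
/-- The topology of `X` is the one induced by `ι : X → E` from the weak topology of `E`. A weakly
compact set `K ⊆ E` is treated as the abstract compact space `X = K` with `ι` the inclusion. -/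
def IsWeaklyInduced {X E : Type*} [TopologicalSpace X] [NormedAddCommGroup E] [NormedSpace ℝ E]
    (ι : X → E) : Prop :=
  IsInducing (fun (x : X) (f : E →L[ℝ] ℝ) => f (ι x))

namespace IsWeaklyInduced

open Set Topology

variable {X E : Type*} [TopologicalSpace X] [NormedAddCommGroup E] [NormedSpace ℝ E] {ι : X → E}

theorem cont (hι : IsWeaklyInduced ι) (f : E →L[ℝ] ℝ) : Continuous fun x => f (ι x) :=
  (continuous_apply f).comp hι.continuous

theorem restrict (hι : IsWeaklyInduced ι) (F : Set X) :
    IsWeaklyInduced fun x : F => ι x :=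
  IsInducing.comp (g := fun (x : X) (f : E →L[ℝ] ℝ) => f (ι x)) hι IsInducing.subtypeVal

theorem t2 (hι : IsWeaklyInduced ι) (hinj : Function.Injective ι) : T2Space X := by
  refine T2Space.of_injective_continuous (f := fun (x : X) (f : E →L[ℝ] ℝ) => f (ι x)) ?_
    hι.continuous
  intro x y hxy
  apply hinj
  refine (SeparatingDual.eq_iff_forall_dual_eq (R := ℝ)).2 fun g => ?_
  exact congrFun hxy g

/-- Mazur's theorem: norm-closed convex sets are weakly closed. -/
theorem isClosed_preimage (hι : IsWeaklyInduced ι) {C : Set E} (hC : IsClosed C)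
    (hconv : Convex ℝ C) : IsClosed (ι ⁻¹' C) := by
  rw [← isOpen_compl_iff, isOpen_iff_mem_nhds]
  intro x hx
  obtain ⟨f, u, h1, h2⟩ := geometric_hahn_banach_closed_point hconv hC hx
  filter_upwards [(isOpen_lt continuous_const (hι.cont f)).mem_nhds h2] with y hy hyC
  exact lt_asymm hy (h1 _ hyC)

theorem norm_le_of_forall {v : E} {r : ℝ} (h : ∀ f : E →L[ℝ] ℝ, ‖f‖ ≤ 1 → f v ≤ r) : ‖v‖ ≤ r := by
  obtain ⟨g, hg, hgv⟩ := exists_dual_vector'' ℝ v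
  have := h g hg
  rw [hgv] at this
  simpa using this

/-- Weak lower semicontinuity of the norm distance, jointly in both points. -/
theorem isClosed_dist_le (hι : IsWeaklyInduced ι) (r : ℝ) :
    IsClosed {p : X × X | ‖ι p.1 - ι p.2‖ ≤ r} := by
  have : {p : X × X | ‖ι p.1 - ι p.2‖ ≤ r} =
      ⋂ f : {f : E →L[ℝ] ℝ // ‖f‖ ≤ 1}, {p | f.1 (ι p.1) - f.1 (ι p.2) ≤ r} := by
    ext p
    simp only [mem_ofPred_eq, mem_iInter, Subtype.forall]
    constructor
    · intro h f hf
      rw [← map_sub]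
      calc f (ι p.1 - ι p.2) ≤ ‖f (ι p.1 - ι p.2)‖ := Real.le_norm_self _
        _ ≤ 1 * ‖ι p.1 - ι p.2‖ := f.le_of_opNorm_le hf _
        _ ≤ r := by simpa using h
    · intro h
      refine norm_le_of_forall fun f hf => ?_
      rw [map_sub]
      exact h f hf
  rw [this]
  refine isClosed_iInter fun f => isClosed_le ?_ continuous_const
  exact ((hι.cont f.1).comp continuous_fst).sub ((hι.cont f.1).comp continuous_snd)

/-- Weakly compact sets are norm bounded, by the uniform boundedness principle in the bidual. -/
theorem exists_norm_le (hι : IsWeaklyInduced ι) [CompactSpace X] : ∃ C, ∀ x, ‖ι x‖ ≤ C := by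
  obtain ⟨C, hC⟩ := banach_steinhaus (g := fun x : X => NormedSpace.inclusionInDoubleDual ℝ E (ι x))
    (fun f => by
      obtain ⟨C, hC⟩ := isCompact_univ.exists_bound_of_continuousOn (hι.cont f).continuousOn
      exact ⟨C, fun x => by simpa using hC x (mem_univ x)⟩)
  refine ⟨C, fun x => ?_⟩
  rw [← (NormedSpace.inclusionInDoubleDualLi ℝ (E := E)).norm_map (ι x)]
  exact hC x

/-- Kaplansky's theorem: the weak topology of a normed space is countably tight. For a fixed
length `k` and a fixed radius `n`, finitely many points of `A` handle all `k`-tuples of functionals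
of norm at most `n`, by weak-* compactness of the dual balls. -/
theorem exists_countable_mem_closure (hι : IsWeaklyInduced ι) {A : Set X} {x : X}
    (hx : x ∈ closure A) : ∃ C ⊆ A, C.Countable ∧ x ∈ closure C := by
  have key : ∀ k n : ℕ, ∃ B ⊆ A, B.Finite ∧ ∀ g : Fin k → (E →L[ℝ] ℝ), (∀ i, ‖g i‖ ≤ n) →
      ∃ y ∈ B, ∀ i, |g i (ι y) - g i (ι x)| < 1 := by
    intro k n
    have hcomp : IsCompact (Set.univ.pi fun _ : Fin k =>
        (⇑(WeakDual.toStrongDual (𝕜 := ℝ) (E := E)) ⁻¹' Metric.closedBall 0 (n : ℝ))) :=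
      isCompact_univ_pi fun _ => WeakDual.isCompact_closedBall _ _
    obtain ⟨B, hBA, hBf, hB⟩ := hcomp.elim_finite_subcover_image (b := A)
      (c := fun y => {g : Fin k → WeakDual ℝ E | ∀ i, |g i (ι y) - g i (ι x)| < 1})
      (fun y _ => by
        simp only [ofPred_forall]
        refine isOpen_iInter_of_finite fun i => isOpen_lt ?_ continuous_const
        exact (((WeakDual.eval_continuous _).comp (continuous_apply i)).sub
          ((WeakDual.eval_continuous _).comp (continuous_apply i))).abs)
      (by
        intro g _
        have hopen : IsOpen {y : X | ∀ i, |g i (ι y) - g i (ι x)| < 1} := by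
          simp only [ofPred_forall]
          refine isOpen_iInter_of_finite fun i => isOpen_lt ?_ continuous_const
          exact ((hι.cont (WeakDual.toStrongDual (g i))).sub continuous_const).abs
        obtain ⟨y, hy, hyA⟩ := mem_closure_iff.1 hx _ hopen (by simp)
        simp only [mem_iUnion]
        exact ⟨y, hyA, hy⟩)
    refine ⟨B, hBA, hBf, fun g hg => ?_⟩
    have := hB (a := fun i => WeakDual.toStrongDual.symm (g i)) (by
      intro i _
      simpa using hg i)
    simp only [mem_iUnion] at this
    obtain ⟨y, hy, h⟩ := this
    exact ⟨y, hy, h⟩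
  choose B hBA hBf hB using key
  refine ⟨⋃ k, ⋃ n, B k n, by simpa using hBA,
    countable_iUnion fun k => countable_iUnion fun n => (hBf k n).countable, ?_⟩
  rw [mem_closure_iff]
  intro o ho hxo
  obtain ⟨W, hW, rfl⟩ := hι.isOpen_iff.1 ho
  obtain ⟨I, u, hu, hIu⟩ := isOpen_pi_iff.1 hW _ hxo
  have hδ : ∀ f : E →L[ℝ] ℝ, ∃ δ > 0, f ∈ I → Metric.ball (f (ι x)) δ ⊆ u f := by
    intro f
    by_cases hf : f ∈ I
    · obtain ⟨δ, h0, h⟩ := Metric.isOpen_iff.1 (hu f hf).1 _ (hu f hf).2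
      exact ⟨δ, h0, fun _ => h⟩
    · exact ⟨1, one_pos, fun h => absurd h hf⟩
  choose δ hδ0 hδ using hδ
  let g : Fin I.card → (E →L[ℝ] ℝ) := fun i =>
    (δ (I.equivFin.symm i).1)⁻¹ • (I.equivFin.symm i).1
  obtain ⟨n, hn⟩ := exists_nat_ge (∑ i, ‖g i‖)
  obtain ⟨y, hy, h⟩ := hB I.card n g fun i =>
    (Finset.single_le_sum (f := fun i => ‖g i‖) (fun _ _ => norm_nonneg _)
      (Finset.mem_univ i)).trans hn
  refine ⟨y, hIu ?_, by simp only [mem_iUnion]; exact ⟨_, _, hy⟩⟩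
  intro f hf
  apply hδ f hf
  have h1 := h (I.equivFin ⟨f, hf⟩)
  simp only [g, Equiv.symm_apply_apply, smul_apply, smul_eq_mul,
    ← mul_sub, abs_mul, abs_inv, abs_of_pos (hδ0 f)] at h1
  rw [inv_mul_lt_iff₀ (hδ0 f), mul_one] at h1
  simpa [Real.dist_eq] using h1

/-- Namioka's theorem: a weakly compact set has nonempty relatively weakly open subsets of
arbitrarily small norm diameter. Otherwise countable tightness yields a countable set `D` each of
whose points `x` is a weak limit of points of `D` at norm distance `> ε` from `x`; the weak closure
of `D` is norm separable, which contradicts Baire's theorem. -/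
theorem exists_nhds_norm_le (hι : IsWeaklyInduced ι) [CompactSpace X] [T2Space X] [Nonempty X]
    {ε : ℝ} (hε : 0 < ε) : ∃ x : X, ∃ V, IsOpen V ∧ x ∈ V ∧ ∀ y ∈ V, ‖ι y - ι x‖ ≤ ε := by
  by_contra! hcon
  have h1 : ∀ x : X, ∃ C ⊆ {y | ε < ‖ι y - ι x‖}, C.Countable ∧ x ∈ closure C := by
    intro x
    apply hι.exists_countable_mem_closure
    rw [mem_closure_iff]
    intro o ho hx
    obtain ⟨y, hy, hlt⟩ := hcon x o ho hx
    exact ⟨y, hy, hlt⟩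
  choose C hC hCc hCcl using h1
  let D : ℕ → Set X := fun n => Nat.rec {Classical.arbitrary X} (fun _ T => ⋃ x ∈ T, C x) n
  have hDc : ∀ n, (D n).Countable := by
    intro n
    induction n with
    | zero => exact countable_singleton _
    | succ n ih => exact ih.biUnion fun x _ => hCc x
  let D' : Set X := ⋃ n, D n
  have hD'c : D'.Countable := countable_iUnion hDc
  have hCD : ∀ x ∈ D', C x ⊆ D' := by
    intro x hx y hy
    obtain ⟨n, hn⟩ := mem_iUnion.1 hx
    refine mem_iUnion.2 ⟨n + 1, ?_⟩
    change y ∈ ⋃ x ∈ D n, C x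
    simp only [mem_iUnion]
    exact ⟨x, hn, hy⟩
  have hD'ne : D'.Nonempty := ⟨Classical.arbitrary X, mem_iUnion.2 ⟨0, rfl⟩⟩
  -- the weak closure of `D'` lies in the norm-closed span of `D'`, hence is norm separable
  have hsep : TopologicalSpace.IsSeparable (ι '' closure D') := by
    have hs := (TopologicalSpace.IsSeparable.span (R := ℝ)
      ((hD'c.image ι).isSeparable)).closure
    refine hs.mono ?_
    rw [image_subset_iff]
    have hcl : IsClosed (ι ⁻¹' closure (Submodule.span ℝ (ι '' D') : Set E)) :=
      hι.isClosed_preimage isClosed_closure (Submodule.convex _).closure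
    refine closure_minimal ?_ hcl
    intro x hx
    exact subset_closure (Submodule.subset_span (mem_image_of_mem _ hx))
  obtain ⟨T, hTc, hT⟩ := hsep
  have : CompactSpace (closure D') := isCompact_iff_compactSpace.1 isClosed_closure.isCompact
  have : Nonempty (closure D') := hD'ne.closure.to_subtype
  have : Countable T := hTc.to_subtype
  have hι' := hι.restrict (closure D')
  obtain ⟨t, z, hz⟩ := nonempty_interior_of_iUnion_of_closed
    (f := fun t : T => {x : closure D' | ι x ∈ Metric.closedBall t.1 (ε / 2)})
    (fun t => hι'.isClosed_preimage Metric.isClosed_closedBall (convex_closedBall _ _))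
    (by
      rw [eq_univ_iff_forall]
      intro x
      have := hT (mem_image_of_mem ι x.2)
      obtain ⟨t, ht, hd⟩ := Metric.mem_closure_iff.1 this (ε / 2) (half_pos hε)
      exact mem_iUnion.2 ⟨⟨t, ht⟩, hd.le⟩)
  obtain ⟨O, hOsub, hO, hzO⟩ := mem_interior.1 hz
  obtain ⟨V, hV, rfl⟩ := isOpen_induced_iff.1 hO
  obtain ⟨x, hxV, hxD⟩ := mem_closure_iff.1 z.2 V hV hzO
  obtain ⟨y, hyV, hyC⟩ := mem_closure_iff.1 (hCcl x) V hV hxV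
  have hx2 : dist (ι x) t ≤ ε / 2 := hOsub (a := ⟨x, subset_closure hxD⟩) hxV
  have hy2 : dist (ι y) t ≤ ε / 2 := hOsub (a := ⟨y, subset_closure (hCD x hxD hyC)⟩) hyV
  have := hC x hyC
  rw [mem_ofPred_eq, ← dist_eq_norm] at this
  have := dist_triangle_right (ι y) (ι x) t.1
  linarith

end IsWeaklyInduced

/-! ### Invariant functionals and fixed points -/

section FixedPoint

open Set Topology

/-- A nonempty closed set `C` of a compact space with a property `Q` stable under arbitrary
intersections contains a minimal nonempty closed set with `Q`. -/
theorem exists_minimal_closed {X : Type*} [TopologicalSpace X] [CompactSpace X] (Q : Set X → Prop)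
    (hQ : ∀ c : Set (Set X), (∀ A ∈ c, Q A) → Q (⋂₀ c)) (C : Set X) (hC : IsClosed C)
    (hne : C.Nonempty) (hCQ : Q C) :
    ∃ M ⊆ C, IsClosed M ∧ M.Nonempty ∧ Q M ∧
      ∀ N ⊆ M, IsClosed N → N.Nonempty → Q N → N = M := by
  obtain ⟨M, hMC, hM⟩ := zorn_superset_nonempty {A : Set X | IsClosed A ∧ A.Nonempty ∧ Q A}
    (by
      intro c hc hchain hcne
      have : Nonempty c := hcne.to_subtype
      refine ⟨⋂₀ c, ⟨isClosed_sInter fun A hA => (hc hA).1, ?_, hQ c fun A hA => (hc hA).2.2⟩,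
        fun s hs => sInter_subset_of_mem hs⟩
      refine IsCompact.nonempty_sInter_of_directed_nonempty_isCompact_isClosed ?_
        (fun U hU => (hc hU).2.1) (fun U hU => (hc hU).1.isCompact) (fun U hU => (hc hU).1)
      intro A hA B hB
      rcases hchain.total hA hB with h | h
      · exact ⟨A, hA, subset_rfl, h⟩
      · exact ⟨B, hB, h, subset_rfl⟩)
    C ⟨hC, hne, hCQ⟩
  exact ⟨M, hMC, hM.prop.1, hM.prop.2.1, hM.prop.2.2, fun N hN h1 h2 h3 =>
    hN.antisymm (hM.le_of_le ⟨h1, h2, h3⟩ hN)⟩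

/-- A left invariant mean on `LUC(S)`, evaluated on the functions `t ↦ φ (t • x₀)`, gives an
invariant positive normalized functional on `C(X)`. Joint continuity of the action on the compact
space `X` is what makes these functions left uniformly continuous. -/
theorem exists_invariant_functional {S X : Type*} [Semigroup S] [TopologicalSpace S]
    [SemitopoSemigroup S] (hLIM : HasLIM (LUCset S)) [TopologicalSpace X] [CompactSpace X]
    (a : S → X → X) (ha : Continuous (Function.uncurry a))
    (hmul : ∀ s t x, a s (a t x) = a (s * t) x) (x₀ : X) :
    ∃ Λ : C(X, ℝ) →ₗ[ℝ] ℝ, Λ 1 = 1 ∧ (∀ φ, (∀ t, 0 ≤ φ (a t x₀)) → 0 ≤ Λ φ) ∧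
      ∀ s φ ψ, (∀ x, ψ x = φ (a s x)) → Λ ψ = Λ φ := by
  obtain ⟨m, hm⟩ := hLIM
  let T : C(X, ℝ) → S → ℂ := fun φ t => ((φ (a t x₀) : ℝ) : ℂ)
  have hbd : ∀ (φ : C(X, ℝ)) x, ‖((φ x : ℝ) : ℂ)‖ ≤ ‖φ‖ := fun φ x => by
    rw [Complex.norm_real]; exact φ.norm_coe_le_norm x
  have hT : ∀ φ, T φ ∈ LUCset S := by
    intro φ
    have hc : Continuous (T φ) := by
      refine Complex.continuous_ofReal.comp (φ.continuous.comp ?_)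
      exact ha.comp (Continuous.prodMk continuous_id continuous_const)
    let F : S →ᵇ ℂ := BoundedContinuousFunction.ofNormedAddCommGroup (T φ) hc ‖φ‖
      fun t => hbd φ _
    refine ⟨F, rfl, ?_⟩
    let Φ : C(S × X, ℝ) := ⟨fun p => φ (a p.1 p.2), φ.continuous.comp ha⟩
    have hΦ : Continuous Φ.curry := Φ.curry.continuous
    rw [IsLUCb, continuous_iff_continuousAt]
    intro s
    rw [ContinuousAt, tendsto_iff_dist_tendsto_zero]
    have h0 := tendsto_iff_dist_tendsto_zero.1 (hΦ.tendsto s)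
    refine squeeze_zero (fun _ => dist_nonneg) (fun s' => ?_) h0
    refine (BoundedContinuousFunction.dist_le dist_nonneg).2 fun t => ?_
    have := ContinuousMap.dist_apply_le_dist (f := Φ.curry s') (g := Φ.curry s) (a t x₀)
    refine le_trans (le_of_eq ?_) this
    change dist ((φ (a (s' * t) x₀) : ℝ) : ℂ) ((φ (a (s * t) x₀) : ℝ) : ℂ) =
      dist (φ (a s' (a t x₀))) (φ (a s (a t x₀)))
    rw [hmul, hmul, Complex.dist_eq, ← Complex.ofReal_sub, Complex.norm_real, Real.dist_eq,
      Real.norm_eq_abs]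
  let Λ : C(X, ℝ) →ₗ[ℝ] ℝ :=
    { toFun := fun φ => (m (T φ)).re
      map_add' := fun φ ψ => by
        have : T (φ + ψ) = T φ + T ψ := by ext t; simp [T]
        rw [this, hm.add _ (hT _) _ (hT _), Complex.add_re]
      map_smul' := fun c φ => by
        have : T (c • φ) = (c : ℂ) • T φ := by ext t; simp [T]
        rw [this, hm.smul _ _ (hT _), Complex.re_ofReal_mul]
        rfl }
  have h1 : Λ 1 = 1 := by
    have : T 1 = fun _ => (1 : ℂ) := by ext t; simp [T]
    change (m (T 1)).re = 1
    rw [this, hm.map_one, Complex.one_re]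
  refine ⟨Λ, h1, ?_, ?_⟩
  · -- `‖M - f‖ ≤ M` for `0 ≤ f ≤ M`, so `|M - m f| ≤ M` and hence `0 ≤ re (m f)`
    intro φ hφ
    let ψ : C(X, ℝ) := ‖φ‖ • 1 - φ
    have hψ : ‖m (T ψ)‖ ≤ ‖φ‖ := by
      refine (hm.norm_le _ (hT ψ)).trans ?_
      refine Real.iSup_le (fun t => ?_) (norm_nonneg _)
      have h2 := (Real.le_norm_self _).trans (φ.norm_coe_le_norm (a t x₀))
      have h3 := hφ t
      have : T ψ t = ((‖φ‖ - φ (a t x₀) : ℝ) : ℂ) := by simp [T, ψ]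
      rw [this, Complex.norm_real, Real.norm_eq_abs, abs_le]
      constructor <;> linarith
    have h4 : Λ ψ ≤ ‖φ‖ := ((Complex.re_le_norm _).trans hψ)
    have h5 : Λ ψ = ‖φ‖ - Λ φ := by
      simp only [ψ, map_sub, map_smul, h1, smul_eq_mul, mul_one]
    linarith
  · intro s φ ψ h
    have : T ψ = lTrans s (T φ) := by
      ext t
      simp only [T, lTrans, h, hmul]
    change (m (T ψ)).re = (m (T φ)).re
    rw [this, hm.left_inv s _ (hT φ)]

/-- Existence of barycenters: a functional on `C(X)` that is positive and normalized on the
compact convex set `C` is evaluation at a point of `C` on all continuous linear functionals. -/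
theorem exists_barycenter {X E : Type*} [TopologicalSpace X] [CompactSpace X]
    [NormedAddCommGroup E] [NormedSpace ℝ E] {ι : X → E} (hι : IsWeaklyInduced ι)
    {C : Set X} (hC : IsClosed C) (hconv : Convex ℝ (ι '' C)) (Λ : C(X, ℝ) →ₗ[ℝ] ℝ)
    (h1 : Λ 1 = 1) (hpos : ∀ φ, (∀ x ∈ C, 0 ≤ φ x) → 0 ≤ Λ φ) :
    ∃ u ∈ C, ∀ f : E →L[ℝ] ℝ, f (ι u) = Λ ⟨fun x => f (ι x), hι.cont f⟩ := by
  let L : (E →L[ℝ] ℝ) → C(X, ℝ) := fun f => ⟨fun x => f (ι x), hι.cont f⟩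
  have h := hC.isCompact.inter_iInter_nonempty (fun f : E →L[ℝ] ℝ => {x | f (ι x) = Λ (L f)})
    (fun f => isClosed_eq (hι.cont f) continuous_const)
    (by
      classical
      intro I
      by_contra hcon
      let p : I → ℝ := fun f => Λ (L f.1)
      let P : E →L[ℝ] (I → ℝ) := ContinuousLinearMap.pi fun f => f.1
      have hcomp : IsCompact (P '' (ι '' C)) := by
        rw [image_image]
        refine hC.isCompact.image ?_
        exact continuous_pi fun f => hι.cont f.1
      have hp : p ∉ P '' (ι '' C) := by
        rintro ⟨_, ⟨x, hx, rfl⟩, hxp⟩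
        refine hcon ⟨x, hx, ?_⟩
        simp only [mem_iInter, mem_ofPred_eq]
        intro f hf
        exact congrFun hxp ⟨f, hf⟩
      obtain ⟨l, b, hl1, hl2⟩ := geometric_hahn_banach_point_closed
        (hconv.is_linear_image P.toLinearMap.isLinear) hcomp.isClosed hp
      have hl : ∀ v : I → ℝ, l v = ∑ f, v f * l (Pi.single f 1) := by
        intro v
        conv_lhs => rw [pi_eq_sum_univ' v]
        simp [map_sum]
      let φ : C(X, ℝ) := ∑ f : I, l (Pi.single f 1) • L f.1
      have hφ : Λ φ = l p := by
        rw [hl p]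
        simp only [φ, map_sum, map_smul, smul_eq_mul, p]
        exact Finset.sum_congr rfl fun f _ => mul_comm _ _
      have h2 : 0 ≤ Λ (φ - b • 1) := by
        refine hpos _ fun x hx => ?_
        have h3 := hl2 _ (mem_image_of_mem P (mem_image_of_mem ι hx))
        rw [hl] at h3
        have h4 : φ x = ∑ f : I, P (ι x) f * l (Pi.single f 1) := by
          simp only [φ, ContinuousMap.sum_apply, ContinuousMap.smul_apply, smul_eq_mul]
          exact Finset.sum_congr rfl fun f _ => mul_comm _ _
        simp only [ContinuousMap.sub_apply, ContinuousMap.smul_apply, ContinuousMap.one_apply,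
          smul_eq_mul, mul_one, h4]
        linarith
      rw [map_sub, map_smul, h1, hφ, smul_eq_mul, mul_one] at h2
      linarith)
  obtain ⟨u, huC, hu⟩ := h
  exact ⟨u, huC, fun f => mem_iInter.1 hu f⟩

/-- The fixed point theorem for a compact space `X` carrying the weak topology of its convex image
in a normed space, given an invariant functional along every orbit. -/
theorem exists_fixed_point {S X E : Type*} [TopologicalSpace X] [CompactSpace X]
    [Nonempty X] [NormedAddCommGroup E] [NormedSpace ℝ E] {ι : X → E} (hι : IsWeaklyInduced ι)
    (hinj : Function.Injective ι) (hconv : Convex ℝ (range ι)) (a : S → X → X)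
    (hcont : ∀ s, Continuous (a s)) (hnon : ∀ s x y, ‖ι (a s x) - ι (a s y)‖ ≤ ‖ι x - ι y‖)
    (hΛ : ∀ x₀ : X, ∃ Λ : C(X, ℝ) →ₗ[ℝ] ℝ, Λ 1 = 1 ∧
      (∀ φ, (∀ t, 0 ≤ φ (a t x₀)) → 0 ≤ Λ φ) ∧
      ∀ s φ ψ, (∀ x, ψ x = φ (a s x)) → Λ ψ = Λ φ) :
    ∃ x, ∀ s, a s x = x := by
  have : T2Space X := hι.t2 hinj
  obtain ⟨C, -, hCcl, hCne, ⟨hCinv, hCconv⟩, hCmin⟩ := exists_minimal_closed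
    (fun A : Set X => (∀ s, ∀ x ∈ A, a s x ∈ A) ∧
      ∀ x ∈ A, ∀ y ∈ A, ∀ z, ∀ p q : ℝ, 0 ≤ p → 0 ≤ q → p + q = 1 →
        p • ι x + q • ι y = ι z → z ∈ A)
    (by
      intro c hc
      refine ⟨fun s x hx A hA => (hc A hA).1 s x (hx A hA), ?_⟩
      intro x hx y hy z p q hp hq hpq hz A hA
      exact (hc A hA).2 x (hx A hA) y (hy A hA) z p q hp hq hpq hz)
    univ isClosed_univ univ_nonempty (by simp)
  obtain ⟨F, hFC, hFcl, hFne, hFinv, hFmin⟩ := exists_minimal_closed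
    (fun A : Set X => ∀ s, ∀ x ∈ A, a s x ∈ A)
    (fun c hc s x hx A hA => hc A hA s x (hx A hA)) C hCcl hCne hCinv
  obtain ⟨x₀, hx₀⟩ := id hFne
  obtain ⟨Λ, h1, hpos₀, hinv⟩ := hΛ x₀
  have hpos : ∀ φ, (∀ x ∈ F, 0 ≤ φ x) → 0 ≤ Λ φ := fun φ h =>
    hpos₀ φ fun t => h _ (hFinv t _ hx₀)
  have hΛmono : ∀ φ ψ : C(X, ℝ), (∀ x ∈ F, φ x ≤ ψ x) → Λ φ ≤ Λ ψ := fun φ ψ h => by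
    have := hpos (ψ - φ) fun x hx => by simpa using h x hx
    rw [map_sub] at this
    linarith
  let tr : S → C(X, ℝ) → C(X, ℝ) := fun s φ => ⟨fun x => φ (a s x), φ.continuous.comp (hcont s)⟩
  have htr : ∀ s φ, Λ (tr s φ) = Λ φ := fun s φ => hinv s φ _ fun _ => rfl
  -- the support of `Λ` is a nonempty closed invariant subset of `F`, hence all of `F`
  have hsupp : ∀ φ : C(X, ℝ), (∀ y ∈ F, 0 ≤ φ y) → Λ φ ≤ 0 → ∀ x ∈ F, φ x ≤ 0 := by
    let J := {φ : C(X, ℝ) // (∀ y ∈ F, 0 ≤ φ y) ∧ Λ φ ≤ 0}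
    have hcl : ∀ φ : J, IsClosed {x : X | φ.1 x ≤ 0} := fun φ =>
      isClosed_le φ.1.continuous continuous_const
    have hFs : F ∩ ⋂ φ : J, {x | φ.1 x ≤ 0} = F := by
      refine hFmin _ inter_subset_left (hFcl.inter (isClosed_iInter hcl)) ?_ ?_
      · refine hFcl.isCompact.inter_iInter_nonempty _ hcl fun u => ?_
        by_contra hcon
        let φ : C(X, ℝ) := ∑ i ∈ u, i.1
        have hφpos : ∀ x ∈ F, 0 < φ x := by
          intro x hx
          by_contra hle
          refine hcon ⟨x, hx, ?_⟩
          simp only [mem_iInter, mem_ofPred_eq]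
          intro i hi
          refine le_trans ?_ (not_lt.1 hle)
          simp only [φ, ContinuousMap.sum_apply]
          exact Finset.single_le_sum (f := fun i : J => i.1 x) (fun j _ => j.2.1 x hx) hi
        obtain ⟨z, hz, hzmin⟩ := hFcl.isCompact.exists_isMinOn hFne φ.continuous.continuousOn
        have h2 : φ z * 1 ≤ Λ φ := by
          rw [← h1, ← smul_eq_mul, ← map_smul]
          refine hΛmono _ _ fun x hx => ?_
          simpa using hzmin hx
        have h3 : Λ φ ≤ 0 := by
          simp only [φ, map_sum]
          exact Finset.sum_nonpos fun i _ => i.2.2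
        have := hφpos z hz
        linarith
      · rintro s x ⟨hx, hx'⟩
        refine ⟨hFinv s x hx, ?_⟩
        rw [mem_iInter] at hx' ⊢
        intro φ
        exact hx' ⟨tr s φ.1, fun y hy => φ.2.1 _ (hFinv s y hy), (htr s φ.1).le.trans φ.2.2⟩
    intro φ hφ hφ0 x hx
    rw [← hFs] at hx
    exact mem_iInter.1 hx.2 ⟨φ, hφ, hφ0⟩
  have hsurj : ∀ s, ∀ y ∈ F, ∃ x ∈ F, a s x = y := by
    intro s y hy
    by_contra hcon
    have hdisj : Disjoint (a s '' F) {y} := by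
      rw [disjoint_singleton_right]
      exact hcon
    obtain ⟨φ, hφ0, hφ1, hφ⟩ := exists_continuous_zero_one_of_isClosed
      (hFcl.isCompact.image (hcont s)).isClosed isClosed_singleton hdisj
    have h2 : Λ φ ≤ 0 := by
      rw [← htr s φ, ← map_zero Λ]
      refine hΛmono _ _ fun x hx => ?_
      have : φ (a s x) = 0 := hφ0 (mem_image_of_mem _ hx)
      exact this.le
    have h3 := hsupp φ (fun x _ => (hφ x).1) h2 y hy
    have h4 : φ y = 1 := hφ1 rfl
    linarith
  obtain ⟨R, hR⟩ := hι.exists_norm_le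
  have hbdd : Bornology.IsBounded (ι '' F) := by
    rw [isBounded_iff_forall_norm_le]
    exact ⟨R, by rintro _ ⟨x, -, rfl⟩; exact hR x⟩
  set d := Metric.diam (ι '' F) with hd
  have hdle : ∀ x ∈ F, ∀ y ∈ F, ‖ι x - ι y‖ ≤ d := fun x hx y hy => by
    rw [← dist_eq_norm]
    exact Metric.dist_le_diam_of_mem hbdd (mem_image_of_mem _ hx) (mem_image_of_mem _ hy)
  rcases (Metric.diam_nonneg : 0 ≤ d).eq_or_lt with h0 | hd0
  · refine ⟨x₀, fun s => hinj ?_⟩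
    have := hdle _ (hFinv s x₀ hx₀) x₀ hx₀
    rw [hd, ← h0] at this
    exact sub_eq_zero.1 (norm_le_zero_iff.1 this)
  exfalso
  -- some relatively open subset of `F` of small diameter lies in a ball of radius `d / 2`
  have : Nonempty F := hFne.to_subtype
  have : CompactSpace F := isCompact_iff_compactSpace.1 hFcl.isCompact
  obtain ⟨z, V', hV', hzV', hsmall⟩ := (hι.restrict F).exists_nhds_norm_le (half_pos hd0)
  obtain ⟨V, hV, rfl⟩ := isOpen_induced_iff.1 hV'
  obtain ⟨ψ, hψ0, hψ1, hψ⟩ := exists_continuous_zero_one_of_isClosed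
    hV.isClosed_compl (isClosed_singleton (x := z.1)) (by
      rw [disjoint_singleton_right]; exact fun h => h hzV')
  have hc0 : 0 < Λ ψ := by
    by_contra hle
    have h2 := hsupp ψ (fun x _ => (hψ x).1) (not_lt.1 hle) z z.2
    have h3 : ψ z = 1 := hψ1 rfl
    linarith
  set c := Λ ψ with hc
  -- all balls of radius `d / 2` centred in `F` have mass at least `c`: the set of such centres is
  -- closed (a projection along a compact factor) and invariant (the action is nonexpansive)
  have hball : ∀ x ∈ F, ∀ φ : C(X, ℝ), (∀ y ∈ F, 0 ≤ φ y) → Λ φ < c →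
      ∃ y ∈ F, ‖ι x - ι y‖ ≤ d / 2 ∧ φ y ≤ 1 := by
    let J := {φ : C(X, ℝ) // (∀ y ∈ F, 0 ≤ φ y) ∧ Λ φ < c}
    let G : J → Set X := fun φ =>
      Prod.fst '' ({p : X × X | ‖ι p.1 - ι p.2‖ ≤ d / 2} ∩ {p | p.2 ∈ F ∧ φ.1 p.2 ≤ 1})
    have hG : ∀ φ x, x ∈ G φ ↔ ∃ y ∈ F, ‖ι x - ι y‖ ≤ d / 2 ∧ φ.1 y ≤ 1 := by
      intro φ x
      constructor
      · rintro ⟨⟨x', y⟩, ⟨h2, h3, h4⟩, rfl⟩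
        exact ⟨y, h3, h2, h4⟩
      · rintro ⟨y, h3, h2, h4⟩
        exact ⟨(x, y), ⟨h2, h3, h4⟩, rfl⟩
    have hGcl : ∀ φ, IsClosed (G φ) := fun φ =>
      isClosedMap_fst_of_compactSpace _ ((hι.isClosed_dist_le _).inter
        ((hFcl.preimage continuous_snd).inter
          (isClosed_le (φ.1.continuous.comp continuous_snd) continuous_const)))
    have hFG : F ∩ ⋂ φ, G φ = F := by
      refine hFmin _ inter_subset_left (hFcl.inter (isClosed_iInter hGcl)) ?_ ?_
      · refine ⟨z, z.2, mem_iInter.2 fun φ => (hG φ z).2 ?_⟩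
        by_contra! hcon
        refine absurd φ.2.2 (not_lt.2 (hΛmono ψ φ.1 fun x hx => ?_))
        by_cases hxV : x ∈ V
        · have h2 := hsmall ⟨x, hx⟩ hxV
          rw [norm_sub_rev] at h2
          exact (hψ x).2.trans (hcon x hx h2).le
        · have : ψ x = 0 := hψ0 hxV
          rw [this]
          exact φ.2.1 x hx
      · rintro s x ⟨hx, hx'⟩
        refine ⟨hFinv s x hx, mem_iInter.2 fun φ => (hG φ _).2 ?_⟩
        obtain ⟨y, hy, h2, h3⟩ := (hG _ _).1 (mem_iInter.1 hx'
          ⟨tr s φ.1, fun y hy => φ.2.1 _ (hFinv s y hy), (htr s φ.1).le.trans_lt φ.2.2⟩)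
        exact ⟨a s y, hFinv s y hy, (hnon s x y).trans h2, h3⟩
    intro x hx φ hφ hφc
    rw [← hFG] at hx
    exact (hG ⟨φ, hφ, hφc⟩ x).1 (mem_iInter.1 hx.2 _)
  have himg : Convex ℝ (ι '' C) := by
    rintro _ ⟨x, hx, rfl⟩ _ ⟨y, hy, rfl⟩ p q hp hq hpq
    obtain ⟨w, hw⟩ := hconv (mem_range_self x) (mem_range_self y) hp hq hpq
    exact ⟨w, hCconv x hx y hy w p q hp hq hpq hw.symm, hw⟩
  obtain ⟨u, huC, hu⟩ := exists_barycenter hι hCcl himg Λ h1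
    fun φ h => hpos φ fun x hx => h x (hFC hx)
  -- the barycenter is a nondiametral point
  let r := d - c * d / 4
  have hur : ∀ y ∈ F, ‖ι u - ι y‖ ≤ r := by
    intro y hy
    refine IsWeaklyInduced.norm_le_of_forall fun f hf => ?_
    have hfle : ∀ x, f (ι x) - f (ι y) ≤ ‖ι y - ι x‖ := fun x => by
      rw [← map_sub, norm_sub_rev]
      exact (Real.le_norm_self _).trans ((f.le_of_opNorm_le hf _).trans (one_mul _).le)
    let h : C(X, ℝ) := ⟨fun x => f (ι x), hι.cont f⟩
    let φ : C(X, ℝ) := (4 / d) • ((d + f (ι y)) • 1 - h)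
    have hφx : ∀ x, φ x = (4 / d) * (d - (f (ι x) - f (ι y))) := fun x => by
      simp [φ, h]; left; ring
    have hφΛ : Λ φ = (4 / d) * (d - (f (ι u) - f (ι y))) := by
      have : f (ι u) = Λ h := hu f
      simp only [φ, map_smul, map_sub, h1, this, smul_eq_mul]
      ring
    have hcφ : c ≤ Λ φ := by
      by_contra hlt
      obtain ⟨x, hx, h2, h3⟩ := hball y hy φ (fun x hx => by
        rw [hφx]
        have := hfle x
        have := hdle y hy x hx
        have : 0 ≤ d - (f (ι x) - f (ι y)) := by linarith
        positivity) (not_le.1 hlt)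
      rw [hφx, div_mul_eq_mul_div, div_le_one hd0] at h3
      have := hfle x
      linarith
    rw [hφΛ, div_mul_eq_mul_div, le_div_iff₀ hd0] at hcφ
    rw [map_sub]
    simp only [r]
    linarith
  have hmin : {x ∈ C | ∀ y ∈ F, ‖ι x - ι y‖ ≤ r} = C := by
    refine hCmin _ (sep_subset _ _) ?_ ⟨u, huC, hur⟩ ⟨?_, ?_⟩
    · have : {x ∈ C | ∀ y ∈ F, ‖ι x - ι y‖ ≤ r} =
          C ∩ ⋂ y ∈ F, ι ⁻¹' Metric.closedBall (ι y) r := by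
        ext x
        simp [dist_eq_norm]
      rw [this]
      exact hCcl.inter (isClosed_biInter fun y _ =>
        hι.isClosed_preimage Metric.isClosed_closedBall (convex_closedBall _ _))
    · rintro s x ⟨hx, hxr⟩
      refine ⟨hCinv s x hx, fun y hy => ?_⟩
      obtain ⟨y', hy', rfl⟩ := hsurj s y hy
      exact (hnon s x y').trans (hxr y' hy')
    · rintro x ⟨hx, hxr⟩ y ⟨hy, hyr⟩ w p q hp hq hpq hw
      refine ⟨hCconv x hx y hy w p q hp hq hpq hw, fun v hv => ?_⟩
      have := convex_closedBall (ι v) r (x := ι x) (by simpa [dist_eq_norm] using hxr v hv)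
        (y := ι y) (by simpa [dist_eq_norm] using hyr v hv) hp hq hpq
      rw [hw] at this
      simpa [dist_eq_norm] using this
  have hFr : ∀ x ∈ F, ∀ y ∈ F, ‖ι x - ι y‖ ≤ r := fun x hx => by
    have hxC := hFC hx
    rw [← hmin] at hxC
    exact hxC.2
  have hr0 : 0 ≤ r := (norm_nonneg _).trans (hFr x₀ hx₀ x₀ hx₀)
  have hdr : d ≤ r := by
    refine Metric.diam_le_of_forall_dist_le hr0 ?_
    rintro _ ⟨x, hx, rfl⟩ _ ⟨y, hy, rfl⟩
    rw [dist_eq_norm]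
    exact hFr x hx y hy
  have : 0 < c * d := mul_pos hc0 hd0
  simp only [r] at hdr
  linarith

end FixedPoint

/-- Theorem `LUC`: if `LUC(S)` has a left invariant mean, then `S` has
the fixed point property `(G*)`: whenever `S` acts on a nonempty weakly compact convex
subset `K` of a Banach space and the action is jointly weakly continuous and nonexpansive,
then `K` contains a common fixed point for `S`. -/
theorem luc_hasLIM_implies_fpp_Gstar (S : Type*) [Semigroup S] [TopologicalSpace S]
    [T2Space S] [SemitopoSemigroup S]
    (hLIM : HasLIM (LUCset S))
    (E : Type*) [NormedAddCommGroup E] [NormedSpace ℝ E] [CompleteSpace E]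
    (K : Set E) (act : S → E → E)
    (hne : K.Nonempty) (hcomp : @IsCompact E (weakTop ℝ E) K) (hconv : Convex ℝ K)
    (hact : IsActionOn act K) (hjc : JointlyWeaklyContOn act K)
    (hnon : NonexpansiveOn act K) :
    ∃ x ∈ K, ∀ s : S, act s x = x := by
  -- the topology on `K` is taken to be the weak one, not the norm topology of the subtype
  let X := {x : E // x ∈ K}
  let τ : TopologicalSpace X := (weakTop ℝ E).induced Subtype.val
  let a : S → X → X := fun s x => ⟨act s x.1, hact.1 s x.2⟩
  have : Nonempty X := hne.to_subtype
  have hval : @Continuous X E τ (weakTop ℝ E) Subtype.val := continuous_induced_dom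
  have : CompactSpace X := (@isCompact_iff_compactSpace E (weakTop ℝ E) K).1 hcomp
  have hι : IsWeaklyInduced (Subtype.val : X → E) := by
    refine ⟨?_⟩
    simp only [τ, weakTop, Pi.topologicalSpace, induced_iInf, induced_compose]
    rfl
  have ha : Continuous (Function.uncurry a) := by
    refine continuous_induced_rng.2 ?_
    have hg : @Continuous (S × X) (S × E) _ (@instTopologicalSpaceProd S E _ (weakTop ℝ E))
        (fun p => (p.1, p.2.1)) :=
      @Continuous.prodMk S E (S × X) _ (weakTop ℝ E) _ _ _ continuous_fst
        (@Continuous.comp _ _ _ _ _ (weakTop ℝ E) _ _ hval continuous_snd)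
    exact @ContinuousOn.comp_continuous _ _ _ _ (@instTopologicalSpaceProd S E _ (weakTop ℝ E))
      (weakTop ℝ E) _ _ _ hjc hg fun p => ⟨trivial, p.2.2⟩
  obtain ⟨x, hx⟩ := exists_fixed_point hι Subtype.val_injective
    (by rw [Subtype.range_val]; exact hconv) a
    (fun s => ha.comp (Continuous.prodMk continuous_const continuous_id))
    (fun s x y => hnon s x.1 x.2 y.1 y.2)
    (exists_invariant_functional hLIM a ha
      fun s t x => Subtype.ext (hact.2 s t x.1 x.2))
  exact ⟨x.1, x.2, fun s => congrArg Subtype.val (hx s)⟩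
end
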